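/- Assume 0 ≤ α < N, p, q > 0, ρ > 0, and that the Dirichlet eigenpair hypothesis holds for (Ω, λ₁, φ). If μ ≤ C_{H,Ω} and p·|γ_*| ≤ N − α (equivalently, p ≤ (N−α)/|γ_*| when γ_* < 0), then the inequality (E): −Δu − μ|x|^{−2}u ≥ (|x|^{−α} * u^p) u^q has no positive solution in C_Ω^ρ. -/

import Mathlib

/-!
Put `Φ(x) = φ(x/|x|)`. For `a = min p 1` the geometric mean `v = u^a (|x|^γ_* Φ)^(1-a)` is again a
positive supersolution of the Hardy operator `-Δ - μ|x|⁻²`. Testing `v` against `|x|^κ k(log|x|) Φ`,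
where `κ = -(N-2) - γ_*` is the larger root, turns the supersolution inequality into
`∫ (k'' + βk') dν ≤ 0` for all test functions `k ≥ 0`, where `β = 2κ + N - 2 ≥ 0` and `ν` is the
image under `x ↦ log|x|` of the measure `v|x|^(κ-2) Φ dx`. On the half-line this forces `ν = 0` as
soon as `ν((-∞, T]) = o(T)`.

The powers of `|x|` are such that `v|x|^(κ-2) ≤ z^a |x|^(-N)` with `z = u|x|^(-γ_*)`, while the
condition `p|γ_*| ≤ N - α` reads `z^p |x|^(-N) ≤ u^p |x|^(-α)`. Since `z^a ≤ δ + C_δ z^p`,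
finiteness of `∫ u^p |x|^(-α)` makes `ν` grow sublinearly, contradicting `v > 0`. Hence that
integral is infinite, and so is `|x|^(-α) * u^p` everywhere.
-/

open MeasureTheory Real Set
open scoped ENNReal NNReal

noncomputable section

/-- Euclidean space `ℝ^N`. -/
abbrev Euc (N : ℕ) := EuclideanSpace ℝ (Fin N)

/-- The Euclidean Laplacian `Δu(x) = ∑ ∂²u/∂xᵢ²(x)`, the trace of the Hessian. -/
def lap (N : ℕ) (u : Euc N → ℝ) (x : Euc N) : ℝ :=
  ∑ i : Fin N,
    iteratedFDeriv ℝ 2 u x ![EuclideanSpace.single i 1, EuclideanSpace.single i 1]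

/-- The open cone `C_Ω^ρ = {x : |x| > ρ, x/|x| ∈ Ω}`. -/
def coneGT (N : ℕ) (ρ : ℝ) (Ω : Set (Euc N)) : Set (Euc N) :=
  {x | ρ < ‖x‖ ∧ ‖x‖⁻¹ • x ∈ Ω}

/-- The full open cone `C_Ω = {x ≠ 0 : x/|x| ∈ Ω}`. -/
def cone (N : ℕ) (Ω : Set (Euc N)) : Set (Euc N) :=
  {x | x ≠ 0 ∧ ‖x‖⁻¹ • x ∈ Ω}

/-- `Ω` is a nonempty, connected, relatively open subset of the unit sphere `S^{N-1}`. -/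
def IsConeDomain (N : ℕ) (Ω : Set (Euc N)) : Prop :=
  Ω ⊆ Metric.sphere (0 : Euc N) 1 ∧ IsConnected Ω ∧
    IsOpen {ω : Metric.sphere (0 : Euc N) 1 | (ω : Euc N) ∈ Ω}

/-- The convolution `(|x|^{-α} * f)(x) = ∫_{C_Ω^ρ} f(y)|x-y|^{-α} dy`, valued in `[0,∞]`. -/
def rieszConv (N : ℕ) (α ρ : ℝ) (Ω : Set (Euc N)) (f : Euc N → ℝ) (x : Euc N) : ℝ≥0∞ :=
  ∫⁻ y in coneGT N ρ Ω, ENNReal.ofReal (f y * ‖x - y‖ ^ (-α))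

/-- Dirichlet eigenpair hypothesis for `(Ω, λ₁, φ)`: `φ` is continuous on the closure of `Ω`,
positive on `Ω`, vanishing on the relative boundary, with maximum `1`, and its 0-homogeneous
extension `Φ(x) = φ(x/|x|)` is `C²` on the open cone and satisfies `ΔΦ = -λ₁|x|⁻²Φ`. -/
structure DirichletEigenpair (N : ℕ) (Ω : Set (Euc N)) (lam1 : ℝ) (φ : Euc N → ℝ) : Prop where
  contOn : ContinuousOn φ (closure Ω)
  pos : ∀ ω ∈ Ω, 0 < φ ω
  bdryZero : ∀ ω ∈ closure Ω \ Ω, φ ω = 0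
  le_one : ∀ ω ∈ closure Ω, φ ω ≤ 1
  max_one : ∃ ω ∈ closure Ω, φ ω = 1
  smoothExt : ContDiffOn ℝ 2 (fun x => φ (‖x‖⁻¹ • x)) (cone N Ω)
  eigen : ∀ x ∈ cone N Ω,
    lap N (fun y => φ (‖y‖⁻¹ • y)) x = -lam1 * ‖x‖ ^ (-(2:ℝ)) * φ (‖x‖⁻¹ • x)

/-- The Hardy constant `C_{H,Ω} = λ₁ + ((N-2)/2)²`. -/
def CHconst (N : ℕ) (lam1 : ℝ) : ℝ := lam1 + (((N : ℝ) - 2) / 2) ^ 2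

/-- The smaller root `γ_*` of `γ(γ + N - 2) = λ₁ - μ`. -/
def gammaStar (N : ℕ) (lam1 μ : ℝ) : ℝ :=
  (-((N : ℝ) - 2) - Real.sqrt (((N : ℝ) - 2) ^ 2 + 4 * (lam1 - μ))) / 2

/-- A positive (classical) solution of `(E) : -Δu - μ|x|⁻²u ≥ (|x|^{-α} * uᵖ) u^q` in `C_Ω^ρ`. -/
def IsPosSolE (N : ℕ) (ρ μ α p q : ℝ) (Ω : Set (Euc N)) (u : Euc N → ℝ) : Prop :=
  ContDiffOn ℝ 2 u (coneGT N ρ Ω) ∧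
  ContinuousOn u (closure (coneGT N ρ Ω)) ∧
  (∀ x ∈ coneGT N ρ Ω, 0 < u x) ∧
  (∀ x ∈ coneGT N ρ Ω, rieszConv N α ρ Ω (fun y => u y ^ p) x < ⊤) ∧
  (∀ x ∈ coneGT N ρ Ω,
    (rieszConv N α ρ Ω (fun y => u y ^ p) x).toReal * u x ^ q ≤
      -lap N u x - μ * ‖x‖ ^ (-(2:ℝ)) * u x)

/-- A positive solution of `(Z) : -Δu - μ|x|⁻²u ≥ (∫_{C_Ω^ρ} uᵖ) u^q` in `C_Ω^ρ`. -/
def IsPosSolZ (N : ℕ) (ρ μ p q : ℝ) (Ω : Set (Euc N)) (u : Euc N → ℝ) : Prop :=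
  ContDiffOn ℝ 2 u (coneGT N ρ Ω) ∧
  ContinuousOn u (closure (coneGT N ρ Ω)) ∧
  (∀ x ∈ coneGT N ρ Ω, 0 < u x) ∧
  (∫⁻ y in coneGT N ρ Ω, ENNReal.ofReal (u y ^ p)) < ⊤ ∧
  (∀ x ∈ coneGT N ρ Ω,
    (∫⁻ y in coneGT N ρ Ω, ENNReal.ofReal (u y ^ p)).toReal * u x ^ q ≤
      -lap N u x - μ * ‖x‖ ^ (-(2:ℝ)) * u x)

/-- A positive solution `(u, v)` of the system `(S)` in `C_Ω^ρ`. -/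
def IsPosSolS (N : ℕ) (ρ μ α p q s : ℝ) (Ω : Set (Euc N)) (u v : Euc N → ℝ) : Prop :=
  ContDiffOn ℝ 2 u (coneGT N ρ Ω) ∧ ContinuousOn u (closure (coneGT N ρ Ω)) ∧
  ContDiffOn ℝ 2 v (coneGT N ρ Ω) ∧ ContinuousOn v (closure (coneGT N ρ Ω)) ∧
  (∀ x ∈ coneGT N ρ Ω, 0 < u x) ∧ (∀ x ∈ coneGT N ρ Ω, 0 < v x) ∧
  (∀ x ∈ coneGT N ρ Ω, rieszConv N α ρ Ω (fun y => v y ^ p) x < ⊤) ∧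
  (∀ x ∈ coneGT N ρ Ω,
    (rieszConv N α ρ Ω (fun y => v y ^ p) x).toReal * v x ^ q ≤
      -lap N u x - μ * ‖x‖ ^ (-(2:ℝ)) * u x) ∧
  (∀ x ∈ coneGT N ρ Ω, u x ^ s ≤ -lap N v x - μ * ‖x‖ ^ (-(2:ℝ)) * v x)

open Filter Topology InnerProductSpace Gradient Laplacian

section LaplacianCalculus

lemma log_norm_eq {E : Type*} [Norm E] (x : E) : log ‖x‖ = 2⁻¹ * log (‖x‖ ^ 2) := by
  simp [log_pow]

variable {E : Type*} [NormedAddCommGroup E] [InnerProductSpace ℝ E]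

lemma gradient_comp [CompleteSpace E] {F : ℝ → ℝ} {f : E → ℝ} {x : E}
    (hF : DifferentiableAt ℝ F (f x)) (hf : DifferentiableAt ℝ f x) :
    ∇ (fun y => F (f y)) x = deriv F (f x) • ∇ f x := by
  have chain : fderiv ℝ (fun y => F (f y)) x = deriv F (f x) • fderiv ℝ f x :=
    (hF.hasDerivAt.comp_hasFDerivAt x hf.hasFDerivAt).fderiv
  simp [gradient, chain]

lemma inner_gradient_eq_fderiv [CompleteSpace E] (f : E → ℝ) (x v : E) :
    ⟪∇ f x, v⟫_ℝ = fderiv ℝ f x v := by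
  rw [gradient, toDual_symm_apply]

lemma fderiv_fderiv_mul {f g : E → ℝ} {x : E} (hf : ContDiffAt ℝ 2 f x)
    (hg : ContDiffAt ℝ 2 g x) (v w : E) :
    fderiv ℝ (fderiv ℝ (fun y => f y * g y)) x v w =
      f x * fderiv ℝ (fderiv ℝ g) x v w + fderiv ℝ f x v * fderiv ℝ g x w +
        (g x * fderiv ℝ (fderiv ℝ f) x v w + fderiv ℝ g x v * fderiv ℝ f x w) := by
  have first : fderiv ℝ (fun y => f y * g y) =ᶠ[𝓝 x]
      fun y => f y • fderiv ℝ g y + g y • fderiv ℝ f y := by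
    filter_upwards [hf.eventually (by simp), hg.eventually (by simp)] with y hfy hgy
    exact fderiv_fun_mul (hfy.differentiableAt two_ne_zero) (hgy.differentiableAt two_ne_zero)
  have hf₁ := (hf.differentiableAt two_ne_zero).hasFDerivAt
  have hg₁ := (hg.differentiableAt two_ne_zero).hasFDerivAt
  have hf₂ := ((hf.fderiv_right (m := 1) le_rfl).differentiableAt one_ne_zero).hasFDerivAt
  have hg₂ := ((hg.fderiv_right (m := 1) le_rfl).differentiableAt one_ne_zero).hasFDerivAt
  rw [first.fderiv_eq, ((hf₁.fun_smul hg₂).fun_add (hg₁.fun_smul hf₂)).fderiv]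
  simp

lemma fderiv_fderiv_comp {F : ℝ → ℝ} {f : E → ℝ} {x : E} (hF : ContDiffAt ℝ 2 F (f x))
    (hf : ContDiffAt ℝ 2 f x) (v w : E) :
    fderiv ℝ (fderiv ℝ (fun y => F (f y))) x v w =
      deriv F (f x) * fderiv ℝ (fderiv ℝ f) x v w +
        deriv (deriv F) (f x) * fderiv ℝ f x v * fderiv ℝ f x w := by
  have hf₁ := (hf.differentiableAt two_ne_zero).hasFDerivAt
  have first : fderiv ℝ (fun y => F (f y)) =ᶠ[𝓝 x] fun y => deriv F (f y) • fderiv ℝ f y := by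
    filter_upwards [hf.eventually (by simp), hf.continuousAt.eventually (hF.eventually (by simp))]
      with y hfy hFy
    exact ((hFy.differentiableAt two_ne_zero).hasDerivAt.comp_hasFDerivAt y
      (hfy.differentiableAt two_ne_zero).hasFDerivAt).fderiv
  have hF₂ : HasDerivAt (deriv F) (deriv (deriv F) (f x)) (f x) :=
    (((hF.fderiv_right (m := 1) le_rfl).clm_apply contDiffAt_const).differentiableAt
      one_ne_zero).hasDerivAt
  have hf₂ := ((hf.fderiv_right (m := 1) le_rfl).differentiableAt one_ne_zero).hasFDerivAt
  have second := (hF₂.comp_hasFDerivAt x hf₁).fun_smul hf₂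
  simp only [Function.comp_def] at second
  rw [first.fderiv_eq, second.fderiv]
  simp [mul_assoc]

lemma contDiffAt_log_norm {n : WithTop ℕ∞} {x : E} (hx : x ≠ 0) :
    ContDiffAt ℝ n (fun y : E => log ‖y‖) x :=
  (contDiffAt_norm ℝ hx).log (norm_ne_zero_iff.2 hx)

variable [FiniteDimensional ℝ E]

lemma laplacian_eq_sum_fderiv_fderiv {ι : Type*} [Fintype ι] (b : OrthonormalBasis ι ℝ E)
    (f : E → ℝ) (x : E) : Δ f x = ∑ i, fderiv ℝ (fderiv ℝ f) x (b i) (b i) := by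
  simp [laplacian_eq_iteratedFDeriv_orthonormalBasis f b, iteratedFDeriv_two_apply]

lemma sum_fderiv_mul_fderiv {ι : Type*} [Fintype ι] (b : OrthonormalBasis ι ℝ E)
    (f g : E → ℝ) (x : E) :
    ∑ i, fderiv ℝ f x (b i) * fderiv ℝ g x (b i) = ⟪∇ f x, ∇ g x⟫_ℝ := by
  rw [← b.sum_inner_mul_inner]
  exact Finset.sum_congr rfl fun i _ => by
    rw [← inner_gradient_eq_fderiv f, ← inner_gradient_eq_fderiv g, real_inner_comm (∇ g x)]

lemma laplacian_mul {f g : E → ℝ} {x : E} (hf : ContDiffAt ℝ 2 f x) (hg : ContDiffAt ℝ 2 g x) :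
    Δ (fun y => f y * g y) x = f x * Δ g x + 2 * ⟪∇ f x, ∇ g x⟫_ℝ + g x * Δ f x := by
  have b := stdOrthonormalBasis ℝ E
  simp only [laplacian_eq_sum_fderiv_fderiv b, ← sum_fderiv_mul_fderiv b, fderiv_fderiv_mul hf hg,
    Finset.mul_sum, ← Finset.sum_add_distrib]
  exact Finset.sum_congr rfl fun i _ => by ring

lemma laplacian_comp {F : ℝ → ℝ} {f : E → ℝ} {x : E} (hF : ContDiffAt ℝ 2 F (f x))
    (hf : ContDiffAt ℝ 2 f x) :
    Δ (fun y => F (f y)) x = deriv (deriv F) (f x) * ‖∇ f x‖ ^ 2 + deriv F (f x) * Δ f x := by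
  have b := stdOrthonormalBasis ℝ E
  simp only [laplacian_eq_sum_fderiv_fderiv b, ← real_inner_self_eq_norm_sq,
    ← sum_fderiv_mul_fderiv b, fderiv_fderiv_comp hF hf, Finset.mul_sum, ← Finset.sum_add_distrib]
  exact Finset.sum_congr rfl fun i _ => by ring

lemma gradient_norm_sq (x : E) : ∇ (fun y : E => ‖y‖ ^ 2) x = (2 : ℝ) • x := by
  refine ext_inner_right ℝ fun v => ?_
  rw [inner_gradient_eq_fderiv, fderiv_norm_sq_apply, inner_smul_left]
  simp

lemma laplacian_norm_sq (x : E) : Δ (fun y : E => ‖y‖ ^ 2) x = 2 * Module.finrank ℝ E := by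
  have second (v : E) : fderiv ℝ (fderiv ℝ (fun y : E => ‖y‖ ^ 2)) x v v = 2 * ‖v‖ ^ 2 := by
    rw [show fderiv ℝ (fun y : E => ‖y‖ ^ 2) = ⇑(2 • innerSL ℝ : E →L[ℝ] E →L[ℝ] ℝ) from
      funext fderiv_norm_sq_apply, ContinuousLinearMap.fderiv, ← real_inner_self_eq_norm_sq]
    exact nsmul_eq_mul 2 _
  have b := stdOrthonormalBasis ℝ E
  simp [laplacian_eq_sum_fderiv_fderiv b, second, mul_comm]

lemma gradient_log_norm {x : E} (hx : x ≠ 0) :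
    ∇ (fun y : E => log ‖y‖) x = (‖x‖ ^ 2)⁻¹ • x := by
  have hx' : ‖x‖ ^ 2 ≠ 0 := by simpa using hx
  simp_rw [log_norm_eq]
  rw [gradient_comp (F := fun s => 2⁻¹ * log s) (f := fun y : E => ‖y‖ ^ 2)
    ((differentiableAt_log hx').const_mul _)
    ((contDiff_norm_sq ℝ (n := 1)).contDiffAt.differentiableAt one_ne_zero), gradient_norm_sq]
  rw [deriv_const_mul _ (differentiableAt_log hx'), deriv_log, smul_smul, mul_right_comm,
    inv_mul_cancel₀ two_ne_zero, one_mul]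

lemma norm_gradient_log_norm_sq {x : E} (hx : x ≠ 0) :
    ‖∇ (fun y : E => log ‖y‖) x‖ ^ 2 = (‖x‖ ^ 2)⁻¹ := by
  have hx' : ‖x‖ ≠ 0 := norm_ne_zero_iff.2 hx
  rw [gradient_log_norm hx, norm_smul, norm_inv, norm_pow, norm_norm]
  field_simp

lemma laplacian_log_norm {x : E} (hx : x ≠ 0) :
    Δ (fun y : E => log ‖y‖) x = (Module.finrank ℝ E - 2) * (‖x‖ ^ 2)⁻¹ := by
  have hx' : ‖x‖ ^ 2 ≠ 0 := by simpa using hx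
  have deriv_log' : deriv (fun s : ℝ => 2⁻¹ * log s) = fun s => 2⁻¹ * s⁻¹ := by
    funext s; simp
  simp_rw [log_norm_eq]
  rw [laplacian_comp (F := fun s => 2⁻¹ * log s) (f := fun y : E => ‖y‖ ^ 2)
    (contDiffAt_const.mul (contDiffAt_log.2 hx'))
    (contDiff_norm_sq ℝ).contDiffAt, gradient_norm_sq, laplacian_norm_sq, deriv_log']
  simp only [deriv_const_mul_field', deriv_inv', mul_neg, norm_smul, norm_ofNat, neg_mul]
  field_simp
  ring

end LaplacianCalculus

section GeometricMean

variable {E : Type*} [NormedAddCommGroup E] [InnerProductSpace ℝ E]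

lemma contDiffAt_geomMean {u w : E → ℝ} {x : E} (hu : ContDiffAt ℝ 2 u x)
    (hw : ContDiffAt ℝ 2 w x) (hux : 0 < u x) (hwx : 0 < w x) (a : ℝ) :
    ContDiffAt ℝ 2 (fun y => u y ^ a * w y ^ (1 - a)) x :=
  (hu.rpow_const_of_ne hux.ne').mul (hw.rpow_const_of_ne hwx.ne')

lemma norm_convexCombo_sq_le (v w : E) {a : ℝ} (ha : a ∈ Icc 0 1) :
    ‖a • v + (1 - a) • w‖ ^ 2 ≤ a * ‖v‖ ^ 2 + (1 - a) * ‖w‖ ^ 2 :=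
  (convexOn_univ_norm.pow (fun _ _ => norm_nonneg _) 2).2 (mem_univ v) (mem_univ w) ha.1
    (sub_nonneg.2 ha.2) (add_sub_cancel a 1)

variable [FiniteDimensional ℝ E]

lemma gradient_linearCombo {f g : E → ℝ} {x : E} (hf : DifferentiableAt ℝ f x)
    (hg : DifferentiableAt ℝ g x) (a b : ℝ) :
    ∇ (fun y => a * f y + b * g y) x = a • ∇ f x + b • ∇ g x := by
  simp [gradient, fderiv_fun_add (hf.const_mul a) (hg.const_mul b), fderiv_const_mul, hf, hg]

lemma laplacian_linearCombo {f g : E → ℝ} {x : E} (hf : ContDiffAt ℝ 2 f x)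
    (hg : ContDiffAt ℝ 2 g x) (a b : ℝ) :
    Δ (fun y => a * f y + b * g y) x = a * Δ f x + b * Δ g x := by
  rw [show (fun y => a * f y + b * g y) = a • f + b • g from rfl,
    ContDiffAt.laplacian_add (f₁ := a • f) (f₂ := b • g) (hf.const_smul a) (hg.const_smul b),
    laplacian_smul a hf, laplacian_smul b hg, smul_eq_mul, smul_eq_mul]

lemma laplacian_eq_mul_log {u : E → ℝ} {x : E} (hu : ContDiffAt ℝ 2 u x) (hpos : 0 < u x) :
    Δ u x = u x * (‖∇ (fun y => log (u y)) x‖ ^ 2 + Δ (fun y => log (u y)) x) := by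
  rw [laplacian_comp (contDiffAt_log.2 hpos.ne') hu,
    gradient_comp (differentiableAt_log hpos.ne') (hu.differentiableAt two_ne_zero)]
  simp only [deriv_log', norm_smul, mul_pow, deriv_inv, norm_inv, norm_eq_abs, inv_pow, sq_abs]
  field_simp
  ring

/- Writing `u = e^ℓ` turns `Δu ≤ cu` into `‖∇ℓ‖² + Δℓ ≤ c`, a condition which is convex in `ℓ`. -/
lemma laplacian_geomMean_le {u w : E → ℝ} {x : E} {a c : ℝ} (ha : a ∈ Icc 0 1)
    (hu : ContDiffAt ℝ 2 u x) (hw : ContDiffAt ℝ 2 w x) (hux : 0 < u x) (hwx : 0 < w x)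
    (hΔu : Δ u x ≤ c * u x) (hΔw : Δ w x ≤ c * w x) :
    Δ (fun y => u y ^ a * w y ^ (1 - a)) x ≤ c * (u x ^ a * w x ^ (1 - a)) := by
  have hlu := hu.log hux.ne'
  have hlw := hw.log hwx.ne'
  have log_eq : (fun y => log (u y ^ a * w y ^ (1 - a))) =ᶠ[𝓝 x]
      fun y => a * log (u y) + (1 - a) * log (w y) := by
    filter_upwards [hu.continuousAt.eventually (lt_mem_nhds hux),
      hw.continuousAt.eventually (lt_mem_nhds hwx)] with y huy hwy
    rw [log_mul (rpow_pos_of_pos huy _).ne' (rpow_pos_of_pos hwy _).ne', log_rpow huy,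
      log_rpow hwy]
  have gradient_eq : ∇ (fun y => log (u y ^ a * w y ^ (1 - a))) x =
      a • ∇ (fun y => log (u y)) x + (1 - a) • ∇ (fun y => log (w y)) x := by
    rw [← gradient_linearCombo (hlu.differentiableAt two_ne_zero)
      (hlw.differentiableAt two_ne_zero)]
    exact congrArg _ log_eq.fderiv_eq
  have log_bound {v : E → ℝ} (hv : ContDiffAt ℝ 2 v x) (hvx : 0 < v x) (hΔ : Δ v x ≤ c * v x) :
      ‖∇ (fun y => log (v y)) x‖ ^ 2 + Δ (fun y => log (v y)) x ≤ c := by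
    rwa [laplacian_eq_mul_log hv hvx, mul_comm, mul_le_mul_iff_left₀ hvx] at hΔ
  have hmean : 0 < u x ^ a * w x ^ (1 - a) := by positivity
  rw [laplacian_eq_mul_log (contDiffAt_geomMean hu hw hux hwx a) hmean, gradient_eq,
    laplacian_congr_nhds log_eq |>.eq_of_nhds, laplacian_linearCombo hlu hlw, mul_comm]
  refine mul_le_mul_of_nonneg_right ?_ hmean.le
  have h₁ := mul_le_mul_of_nonneg_left (log_bound hu hux hΔu) ha.1
  have h₂ := mul_le_mul_of_nonneg_left (log_bound hw hwx hΔw) (sub_nonneg.2 ha.2)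
  linarith [norm_convexCombo_sq_le (∇ (fun y => log (u y)) x) (∇ (fun y => log (w y)) x) ha]

end GeometricMean

section Separation

variable {E : Type*} [NormedAddCommGroup E] [InnerProductSpace ℝ E]

/-- The `0`-homogeneous extension `Φ(x) = φ(x/|x|)` of a function `φ` on the unit sphere; its value
at the origin is the junk value `φ 0`. -/
def angularExt (φ : E → ℝ) (x : E) : ℝ := φ (‖x‖⁻¹ • x)

lemma angularExt_smul (φ : E → ℝ) {s : ℝ} (hs : 0 < s) (x : E) :
    angularExt φ (s • x) = angularExt φ x := by
  have : (s * ‖x‖)⁻¹ * s = ‖x‖⁻¹ := by field_simp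
  rw [angularExt, norm_smul, norm_of_nonneg hs.le, smul_smul, this, angularExt]

lemma fderiv_angularExt_self {φ : E → ℝ} {x : E} (hφ : DifferentiableAt ℝ (angularExt φ) x) :
    fderiv ℝ (angularExt φ) x x = 0 := by
  have ray : HasDerivAt (fun s : ℝ => s • x) x 1 := by
    simpa using (hasDerivAt_id (1 : ℝ)).smul_const x
  have along_ray : HasDerivAt (fun s : ℝ => angularExt φ (s • x)) (fderiv ℝ (angularExt φ) x x) 1 :=
    HasFDerivAt.comp_hasDerivAt (l := angularExt φ) (1 : ℝ)
      (by simpa using hφ.hasFDerivAt) ray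
  have const : (fun s : ℝ => angularExt φ (s • x)) =ᶠ[𝓝 1] fun _ => angularExt φ x := by
    filter_upwards [lt_mem_nhds zero_lt_one] with s hs using angularExt_smul φ hs x
  exact along_ray.unique ((hasDerivAt_const _ _).congr_of_eventuallyEq const)

variable [FiniteDimensional ℝ E]

lemma inner_gradient_log_norm_angularExt {φ : E → ℝ} {x : E} (hx : x ≠ 0)
    (hφ : DifferentiableAt ℝ (angularExt φ) x) :
    ⟪∇ (fun y => log ‖y‖) x, ∇ (angularExt φ) x⟫_ℝ = 0 := by
  rw [gradient_log_norm hx, inner_smul_left, real_inner_comm, inner_gradient_eq_fderiv,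
    fderiv_angularExt_self hφ, mul_zero]

lemma laplacian_separated {G H : ℝ → ℝ} {φ : E → ℝ} {x : E} (hx : x ≠ 0)
    (hφ : ContDiffAt ℝ 2 (angularExt φ) x) (hG : ContDiffAt ℝ 2 G (log ‖x‖))
    (hH : ContDiffAt ℝ 2 H (angularExt φ x)) :
    Δ (fun y => G (log ‖y‖) * H (angularExt φ y)) x =
      (‖x‖ ^ 2)⁻¹ * (deriv (deriv G) (log ‖x‖) + (Module.finrank ℝ E - 2) * deriv G (log ‖x‖)) *
          H (angularExt φ x) +
        G (log ‖x‖) * (deriv (deriv H) (angularExt φ x) * ‖∇ (angularExt φ) x‖ ^ 2 +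
          deriv H (angularExt φ x) * Δ (angularExt φ) x) := by
  have hlog := contDiffAt_log_norm (n := 2) hx
  have orthogonal : ⟪∇ (fun y : E => G (log ‖y‖)) x, ∇ (fun y => H (angularExt φ y)) x⟫_ℝ = 0 := by
    rw [gradient_comp (f := fun y : E => log ‖y‖) (hG.differentiableAt two_ne_zero)
        (hlog.differentiableAt two_ne_zero),
      gradient_comp (hH.differentiableAt two_ne_zero) (hφ.differentiableAt two_ne_zero),
      inner_smul_left, inner_smul_right,
      inner_gradient_log_norm_angularExt hx (hφ.differentiableAt two_ne_zero), mul_zero, mul_zero]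
  rw [laplacian_mul (f := fun y => G (log ‖y‖)) (g := fun y => H (angularExt φ y))
    (hG.comp x hlog) (hH.comp x hφ), orthogonal, laplacian_comp (f := fun y : E => log ‖y‖) hG hlog,
    laplacian_comp hH hφ, norm_gradient_log_norm_sq hx, laplacian_log_norm hx]
  ring

end Separation

section ExtensionByZero

lemma tsupport_indicator_subset_of_isClosed {X : Type*} [TopologicalSpace X] {S K : Set X}
    {g : X → ℝ} (hK : IsClosed K) (hg : ∀ x ∈ S \ K, g x = 0) :
    tsupport (S.indicator g) ⊆ K := by
  refine closure_minimal (fun x hx => ?_) hK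
  rw [Function.mem_support, indicator_apply_ne_zero] at hx
  exact by_contra fun hxK => hx.2 (hg x ⟨hx.1, hxK⟩)

lemma contDiff_indicator_of_isClosed {E : Type*} [NormedAddCommGroup E] [NormedSpace ℝ E]
    {S K : Set E} {g : E → ℝ} {n : WithTop ℕ∞} (hS : IsOpen S) (hK : IsClosed K)
    (hKS : K ⊆ S) (hgn : ContDiffOn ℝ n g S) (hg : ∀ x ∈ S \ K, g x = 0) :
    ContDiff ℝ n (S.indicator g) := by
  refine contDiff_iff_contDiffAt.2 fun x => ?_
  by_cases hx : x ∈ S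
  · refine (hgn.contDiffAt (hS.mem_nhds hx)).congr_of_eventuallyEq ?_
    filter_upwards [hS.mem_nhds hx] with y hy using indicator_of_mem hy g
  · have hxK : x ∉ tsupport (S.indicator g) := fun h =>
      hx (hKS (tsupport_indicator_subset_of_isClosed hK hg h))
    exact contDiffAt_const.congr_of_eventuallyEq (notMem_tsupport_iff_eventuallyEq.1 hxK)

end ExtensionByZero

section Green

lemma integrable_mul_of_tsupport_subset {X : Type*} [TopologicalSpace X] [MeasurableSpace X]
    [OpensMeasurableSpace X] {μ : Measure X} [IsFiniteMeasureOnCompacts μ] {U : Set X}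
    {f g : X → ℝ} (hU : IsOpen U) (hf : ContinuousOn f U) (hg : Continuous g)
    (hc : HasCompactSupport g) (hs : tsupport g ⊆ U) : Integrable (fun x => f x * g x) μ := by
  refine Continuous.integrable_of_hasCompactSupport ?_ hc.mul_left
  exact continuous_of_tsupport fun x hx =>
    (hf.continuousAt (hU.mem_nhds (hs (tsupport_mul_subset_right hx)))).mul hg.continuousAt

variable {E : Type*} [NormedAddCommGroup E] [InnerProductSpace ℝ E] {U : Set E}

lemma contDiffOn_fderiv_apply {f : E → ℝ} (hU : IsOpen U) (hf : ContDiffOn ℝ 2 f U) (w : E) :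
    ContDiffOn ℝ 1 (fun x => fderiv ℝ f x w) U :=
  (hf.fderiv_of_isOpen hU le_rfl).clm_apply contDiffOn_const

lemma continuousOn_fderiv_fderiv_apply {f : E → ℝ} (hU : IsOpen U) (hf : ContDiffOn ℝ 2 f U)
    (w : E) : ContinuousOn (fun x => fderiv ℝ (fun y => fderiv ℝ f y w) x w) U :=
  ((contDiffOn_fderiv_apply hU hf w).continuousOn_fderiv_of_isOpen hU le_rfl).clm_apply
    continuousOn_const

variable [FiniteDimensional ℝ E]

lemma laplacian_eq_sum_fderiv_fderiv_apply {ι : Type*} [Fintype ι] (b : OrthonormalBasis ι ℝ E)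
    {f : E → ℝ} {x : E} (hf : ContDiffAt ℝ 2 f x) :
    Δ f x = ∑ i, fderiv ℝ (fun y => fderiv ℝ f y (b i)) x (b i) := by
  have hf₁ := (hf.fderiv_right (m := 1) le_rfl).differentiableAt one_ne_zero
  rw [laplacian_eq_sum_fderiv_fderiv b]
  exact Finset.sum_congr rfl fun i _ => by
    rw [fderiv_clm_apply hf₁ (differentiableAt_const _)]; simp

lemma continuousOn_laplacian {f : E → ℝ} (hU : IsOpen U) (hf : ContDiffOn ℝ 2 f U) :
    ContinuousOn (Δ f) U := by
  have b := stdOrthonormalBasis ℝ E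
  refine (continuousOn_finsetSum _ fun i _ => continuousOn_fderiv_fderiv_apply hU hf (b i)).congr
    fun x hx => laplacian_eq_sum_fderiv_fderiv_apply b (hf.contDiffAt (hU.mem_nhds hx))

lemma tsupport_laplacian_subset (f : E → ℝ) : tsupport (Δ f) ⊆ tsupport f := by
  refine closure_minimal (fun x hx => by_contra fun hxf => hx ?_) (isClosed_tsupport f)
  rw [(laplacian_congr_nhds (notMem_tsupport_iff_eventuallyEq.1 hxf)).eq_of_nhds]
  exact congrFun laplacian_const x

variable [MeasurableSpace E] [BorelSpace E] {μ : Measure E} [μ.IsAddHaarMeasure]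

lemma integral_mul_fderiv_eq_neg_of_tsupport_subset {f g : E → ℝ} (hU : IsOpen U)
    (hf : ContDiffOn ℝ 1 f U) (hg : ContDiff ℝ 1 g) (hc : HasCompactSupport g)
    (hs : tsupport g ⊆ U) (w : E) :
    ∫ x, f x * fderiv ℝ g x w ∂μ = -∫ x, fderiv ℝ f x w * g x ∂μ := by
  have hf' : ContinuousOn (fun x => fderiv ℝ f x w) U :=
    (hf.continuousOn_fderiv_of_isOpen hU le_rfl).clm_apply continuousOn_const
  have hg' : Continuous fun x => fderiv ℝ g x w :=
    (hg.continuous_fderiv one_ne_zero).clm_apply continuous_const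
  have hs' := tsupport_fderiv_apply_subset ℝ (f := g) w
  exact integral_mul_fderiv_eq_neg_fderiv_mul_of_integrable
    (integrable_mul_of_tsupport_subset hU hf' hg.continuous hc hs)
    (integrable_mul_of_tsupport_subset hU hf.continuousOn hg' (hc.fderiv_apply ℝ w)
      (hs'.trans hs))
    (integrable_mul_of_tsupport_subset hU hf.continuousOn hg.continuous hc hs)
    (fun x hx => (hf.contDiffAt (hU.mem_nhds (hs hx))).differentiableAt one_ne_zero)
    (fun x _ => hg.differentiable one_ne_zero x)

lemma integral_mul_laplacian_of_tsupport_subset {v ψ : E → ℝ} (hU : IsOpen U)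
    (hv : ContDiffOn ℝ 2 v U) (hψ : ContDiff ℝ 2 ψ) (hc : HasCompactSupport ψ)
    (hs : tsupport ψ ⊆ U) : ∫ x, v x * Δ ψ x ∂μ = ∫ x, Δ v x * ψ x ∂μ := by
  have b := stdOrthonormalBasis ℝ E
  have expand_left : (fun x => v x * Δ ψ x) =
      fun x => ∑ i, v x * fderiv ℝ (fun y => fderiv ℝ ψ y (b i)) x (b i) := by
    funext x
    rw [laplacian_eq_sum_fderiv_fderiv_apply b hψ.contDiffAt, Finset.mul_sum]
  have expand_right : (fun x => Δ v x * ψ x) =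
      fun x => ∑ i, fderiv ℝ (fun y => fderiv ℝ v y (b i)) x (b i) * ψ x := by
    funext x
    by_cases hx : x ∈ tsupport ψ
    · rw [laplacian_eq_sum_fderiv_fderiv_apply b (hv.contDiffAt (hU.mem_nhds (hs hx))),
        Finset.sum_mul]
    · simp [image_eq_zero_of_notMem_tsupport hx]
  have hψ₁ (w : E) : ContDiff ℝ 1 fun x => fderiv ℝ ψ x w :=
    (hψ.fderiv_right le_rfl).clm_apply contDiff_const
  have hs₁ (w : E) := (tsupport_fderiv_apply_subset ℝ (f := ψ) w).trans hs
  rw [expand_left, expand_right, integral_finsetSum, integral_finsetSum]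
  · refine Finset.sum_congr rfl fun i _ => ?_
    rw [integral_mul_fderiv_eq_neg_of_tsupport_subset hU (hv.of_le one_le_two) (hψ₁ _)
      (hc.fderiv_apply ℝ _) (hs₁ _), neg_eq_iff_eq_neg,
      integral_mul_fderiv_eq_neg_of_tsupport_subset hU (contDiffOn_fderiv_apply hU hv _)
      (hψ.of_le one_le_two) hc hs]
  · exact fun i _ => integrable_mul_of_tsupport_subset hU
      (continuousOn_fderiv_fderiv_apply hU hv _) hψ.continuous hc hs
  · exact fun i _ => integrable_mul_of_tsupport_subset hU hv.continuousOn
      (continuousOn_univ.1 (continuousOn_fderiv_fderiv_apply isOpen_univ hψ.contDiffOn _))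
      ((hc.fderiv_apply ℝ _).fderiv_apply ℝ _)
      ((tsupport_fderiv_apply_subset ℝ _).trans (hs₁ _))

lemma integrable_mul_laplacian {v ψ : E → ℝ} (hU : IsOpen U) (hv : ContinuousOn v U)
    (hψ : ContDiff ℝ 2 ψ) (hψc : HasCompactSupport ψ) (hs : tsupport ψ ⊆ U) :
    Integrable (fun x => v x * Δ ψ x) μ :=
  integrable_mul_of_tsupport_subset hU hv
    (continuousOn_univ.1 (continuousOn_laplacian isOpen_univ hψ.contDiffOn))
    (hψc.of_isClosed_subset (isClosed_tsupport _) (tsupport_laplacian_subset ψ))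
    ((tsupport_laplacian_subset ψ).trans hs)

lemma integrable_mul_laplacian_add {v c ψ : E → ℝ} (hU : IsOpen U) (hv : ContinuousOn v U)
    (hc : ContinuousOn c U) (hψ : ContDiff ℝ 2 ψ) (hψc : HasCompactSupport ψ)
    (hs : tsupport ψ ⊆ U) : Integrable (fun x => v x * (Δ ψ x + c x * ψ x)) μ :=
  ((integrable_mul_laplacian hU hv hψ hψc hs).add
    (integrable_mul_of_tsupport_subset hU (hv.mul hc) hψ.continuous hψc hs)).congr
    (ae_of_all _ fun x => by simp only [Pi.add_apply, Pi.mul_apply]; ring)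

lemma integral_mul_laplacian_add_nonpos {v c ψ : E → ℝ} (hU : IsOpen U)
    (hv : ContDiffOn ℝ 2 v U) (hc : ContinuousOn c U) (hvc : ∀ x ∈ U, Δ v x + c x * v x ≤ 0)
    (hψ : ContDiff ℝ 2 ψ) (hψc : HasCompactSupport ψ) (hs : tsupport ψ ⊆ U) (hψ0 : 0 ≤ ψ) :
    ∫ x, v x * (Δ ψ x + c x * ψ x) ∂μ ≤ 0 := by
  have int_vΔψ := integrable_mul_laplacian (μ := μ) hU hv.continuousOn hψ hψc hs
  have int_Δvψ : Integrable (fun x => Δ v x * ψ x) μ :=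
    integrable_mul_of_tsupport_subset hU (continuousOn_laplacian hU hv) hψ.continuous hψc hs
  have int_cvψ : Integrable (fun x => c x * v x * ψ x) μ :=
    integrable_mul_of_tsupport_subset hU (hc.mul hv.continuousOn) hψ.continuous hψc hs
  calc ∫ x, v x * (Δ ψ x + c x * ψ x) ∂μ
      = ∫ x, (v x * Δ ψ x + c x * v x * ψ x) ∂μ := by congr 1 with x; ring
    _ = ∫ x, (Δ v x * ψ x + c x * v x * ψ x) ∂μ := by
        rw [integral_add int_vΔψ int_cvψ, integral_add int_Δvψ int_cvψ,
          integral_mul_laplacian_of_tsupport_subset hU hv hψ hψc hs]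
    _ ≤ 0 := by
        refine integral_nonpos fun x => ?_
        by_cases hx : x ∈ tsupport ψ
        · rw [Pi.zero_apply, ← add_mul]
          exact mul_nonpos_of_nonpos_of_nonneg (hvc x (hs hx)) (hψ0 x)
        · simp [image_eq_zero_of_notMem_tsupport hx]

end Green

section OneVariable

lemma hasDerivAt_primitive {s : ℝ → ℝ} (hs : Continuous s) (a y : ℝ) :
    HasDerivAt (fun y => ∫ z in a..y, s z) (s y) y :=
  intervalIntegral.integral_hasDerivAt_right (hs.intervalIntegrable _ _)
    (hs.stronglyMeasurableAtFilter _ _) hs.continuousAt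

lemma contDiff_two_of_hasDerivAt {f f' : ℝ → ℝ} (hf : ∀ y, HasDerivAt f (f' y) y)
    (hf' : ContDiff ℝ 1 f') : ContDiff ℝ 2 f := by
  have hderiv : deriv f = f' := funext fun y => (hf y).deriv
  rw [← one_add_one_eq_two, contDiff_succ_iff_deriv, hderiv]
  exact ⟨fun y => (hf y).differentiableAt, by simp, hf'⟩

lemma primitive_eq_zero {s : ℝ → ℝ} {a b y : ℝ} (hs : ∀ z ≤ b, s z = 0) (ha : a ≤ b)
    (hy : y ≤ b) : ∫ z in a..y, s z = 0 := by
  rw [intervalIntegral.integral_congr (g := fun _ => 0), intervalIntegral.integral_zero]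
  exact fun z hz => hs z (hz.2.trans (max_le ha hy))

lemma primitive_nonneg {s : ℝ → ℝ} {a : ℝ} (hs : ∀ z ≤ a, s z = 0) (h0 : 0 ≤ s) (y : ℝ) :
    0 ≤ ∫ z in a..y, s z := by
  rcases le_total y a with hy | hy
  · exact (primitive_eq_zero hs le_rfl hy).ge
  · exact intervalIntegral.integral_nonneg hy fun z _ => h0 z

lemma primitive_convex_bounds {s : ℝ → ℝ} {b y : ℝ} (hs : Continuous s) (hmono : Monotone s)
    (h0 : 0 ≤ s) (h1 : ∀ z, s z ≤ 1) (hb : 0 ≤ b) (hsb : ∀ z, b ≤ z → s z = 1) (hy : 0 ≤ y) :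
    (∫ z in (0:ℝ)..y, s z) ∈ Icc (y - b) y ∧ y * s y - (∫ z in (0:ℝ)..y, s z) ∈ Icc 0 b := by
  have hint : ∀ c d, IntervalIntegrable s volume c d := hs.intervalIntegrable
  have hle_mul : ∫ z in (0:ℝ)..y, s z ≤ y * s y := by
    simpa using intervalIntegral.integral_mono_on hy (hint 0 y)
      (_root_.intervalIntegrable_const (c := s y)) fun z hz => hmono hz.2
  have hmul_le : y * s y ≤ y := mul_le_of_le_one_right hy (h1 y)
  have hge : y - b ≤ ∫ z in (0:ℝ)..y, s z := by
    rcases le_total y b with hyb | hby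
    · exact (sub_nonpos.2 hyb).trans (intervalIntegral.integral_nonneg hy fun z _ => h0 z)
    · have hlast : ∫ z in b..y, s z = y - b := by
        rw [intervalIntegral.integral_congr (g := fun _ => 1), intervalIntegral.integral_const]
        · simp
        · exact fun z hz => hsb z ((le_min le_rfl hby).trans hz.1)
      rw [← intervalIntegral.integral_add_adjacent_intervals (hint 0 b) (hint b y), hlast]
      exact le_add_of_nonneg_left (intervalIntegral.integral_nonneg hb fun z _ => h0 z)
  exact ⟨⟨hge, hle_mul.trans hmul_le⟩, by linarith, by linarith⟩

/- `F ∘ Φ` replaces the angular function `Φ`, which is not supported away from the lateral boundary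
of the cone; convexity of `F` gives the error term `F''(Φ)|∇Φ|²` a sign. -/
lemma exists_convex_truncation {ε : ℝ} (hε : 0 < ε) :
    ∃ F : ℝ → ℝ, ContDiff ℝ 2 F ∧ (∀ y ≤ ε, F y = 0) ∧ 0 ≤ F ∧
      (∀ y, 0 ≤ deriv (deriv F) y) ∧
      ∀ y, 0 ≤ y → F y ∈ Icc (y - 2 * ε) y ∧ y * deriv F y - F y ∈ Icc 0 (2 * ε) := by
  set s : ℝ → ℝ := fun y => smoothTransition ((y - ε) / ε)
  have hs : ContDiff ℝ 1 s := smoothTransition.contDiff (n := 1).comp (by fun_prop)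
  have hmono : Monotone s := fun a b hab => smoothTransition.monotone (by gcongr)
  have hzero : ∀ y ≤ ε, s y = 0 := fun y hy =>
    smoothTransition.zero_of_nonpos (div_nonpos_of_nonpos_of_nonneg (sub_nonpos.2 hy) hε.le)
  have hone : ∀ y, 2 * ε ≤ y → s y = 1 := fun y hy =>
    smoothTransition.one_of_one_le ((one_le_div hε).2 (by linarith))
  have h0 : 0 ≤ s := fun y => smoothTransition.nonneg _
  have hderiv : deriv (fun y => ∫ z in (0:ℝ)..y, s z) = s :=
    funext fun y => (hasDerivAt_primitive hs.continuous 0 y).deriv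
  refine ⟨fun y => ∫ z in (0:ℝ)..y, s z,
    contDiff_two_of_hasDerivAt (hasDerivAt_primitive hs.continuous 0) hs,
    fun y => primitive_eq_zero hzero hε.le,
    primitive_nonneg (fun z hz => hzero z (hz.trans hε.le)) h0, ?_, ?_⟩
  · rw [hderiv]
    exact fun y => hmono.deriv_nonneg
  · rw [hderiv]
    exact fun y => primitive_convex_bounds hs.continuous hmono h0
      (fun z => smoothTransition.le_one _) (by positivity) hone

lemma deriv_eventuallyEq_const {f : ℝ → ℝ} {c y : ℝ} (hf : f =ᶠ[𝓝 y] fun _ => c) :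
    deriv f y = 0 ∧ deriv (deriv f) y = 0 := by
  have hderiv : deriv f =ᶠ[𝓝 y] fun _ => 0 := by simpa using hf.deriv
  exact ⟨hderiv.eq_of_nhds, by simpa using hderiv.deriv_eq⟩

lemma exists_smooth_step : ∃ (B : ℝ) (S : ℝ → ℝ), ContDiff ℝ 2 S ∧ (∀ y ≤ 1, S y = 1) ∧
    (∀ y, 2 ≤ y → S y = 0) ∧ 0 ≤ S ∧ ∀ y, |deriv S y| ≤ B ∧ |deriv (deriv S) y| ≤ B := by
  set S : ℝ → ℝ := fun y => smoothTransition (2 - y)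
  have hS : ContDiff ℝ 2 S := smoothTransition.contDiff (n := 2).comp (by fun_prop)
  have hone : ∀ y ≤ 1, S y = 1 := fun y hy => smoothTransition.one_of_one_le (by linarith)
  have hzero : ∀ y, 2 ≤ y → S y = 0 := fun y hy => smoothTransition.zero_of_nonpos (by linarith)
  have hsupp : HasCompactSupport (deriv S) := by
    refine HasCompactSupport.intro (isCompact_Icc (a := 1) (b := 2)) fun y hy => ?_
    rcases lt_or_ge y 1 with h | h
    · exact (deriv_eventuallyEq_const
        (eventually_of_mem (Iio_mem_nhds h) fun z hz => hone z (le_of_lt hz))).1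
    · have h2 : 2 < y := not_le.1 fun h2 => hy ⟨h, h2⟩
      exact (deriv_eventuallyEq_const
        (eventually_of_mem (Ioi_mem_nhds h2) fun z hz => hzero z (le_of_lt hz))).1
  have hS' : ContDiff ℝ 1 (deriv S) := hS.deriv'
  obtain ⟨B₁, hB₁⟩ := hS'.continuous.bounded_above_of_compact_support hsupp
  obtain ⟨B₂, hB₂⟩ := (hS'.continuous_deriv le_rfl).bounded_above_of_compact_support hsupp.deriv
  exact ⟨max B₁ B₂, S, hS, hone, hzero, fun y => smoothTransition.nonneg _,
    fun y => ⟨(hB₁ y).trans (le_max_left _ _), (hB₂ y).trans (le_max_right _ _)⟩⟩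

lemma exists_smooth_cutoff : ∃ B : ℝ, ∀ T, 0 < T → ∃ χ : ℝ → ℝ, ContDiff ℝ 2 χ ∧
    (∀ y ≤ T, χ y = 1) ∧ (∀ y, 2 * T ≤ y → χ y = 0) ∧ 0 ≤ χ ∧
    ∀ y, |deriv χ y| ≤ B / T ∧ |deriv (deriv χ) y| ≤ B / T ^ 2 := by
  obtain ⟨B, S, hS, hone, hzero, h0, hbound⟩ := exists_smooth_step
  refine ⟨B, fun T hT => ⟨fun y => S (T⁻¹ * y), hS.comp (by fun_prop),
    fun y hy => hone _ ?_, fun y hy => hzero _ ?_, fun y => h0 (T⁻¹ * y), fun y => ?_⟩⟩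
  · rwa [inv_mul_le_one₀ hT]
  · rwa [le_inv_mul_iff₀ hT, mul_comm]
  · have hderiv : deriv (fun y => S (T⁻¹ * y)) = fun y => T⁻¹ * deriv S (T⁻¹ * y) :=
      funext fun y => by rw [deriv_comp_mul_left T⁻¹ S, smul_eq_mul]
    have hderiv2 : deriv (deriv fun y => S (T⁻¹ * y)) y =
        T⁻¹ * (T⁻¹ * deriv (deriv S) (T⁻¹ * y)) := by
      rw [hderiv, deriv_const_mul_field, deriv_comp_mul_left T⁻¹ (deriv S), smul_eq_mul]
    rw [hderiv2, hderiv]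
    have hb := hbound (T⁻¹ * y)
    simp only [abs_mul, abs_inv, abs_of_pos hT]
    constructor
    · rw [div_eq_inv_mul]
      gcongr
      exact hb.1
    · rw [← mul_assoc, ← mul_inv, ← sq, div_eq_inv_mul]
      gcongr
      exact hb.2

lemma exists_damped_primitive {G Q : ℝ → ℝ} {β a : ℝ}
    (hG : ∀ y, HasDerivAt G (Q y) y) (hQ0 : 0 ≤ Q) (hGa : ∀ y ≤ a, G y = 0) :
    ∃ θ : ℝ → ℝ, (∀ y, HasDerivAt θ (G y - β * θ y) y) ∧ (∀ y ≤ a, θ y = 0) ∧ 0 ≤ θ ∧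
      ∀ y, β * θ y ≤ G y := by
  have hGcont : Continuous G := continuous_iff_continuousAt.2 fun y => (hG y).continuousAt
  have hGmono : Monotone G := monotone_of_deriv_nonneg (fun y => (hG y).differentiableAt)
    fun y => (hG y).deriv ▸ hQ0 y
  have hG0 : 0 ≤ G := fun y =>
    (hGa _ (min_le_right y a)).symm.le.trans (hGmono (min_le_left y a))
  have hexp : ∀ c y, HasDerivAt (fun y => exp (c * y)) (exp (c * y) * c) y := fun c y => by
    simpa using ((hasDerivAt_id y).const_mul c).exp
  set P : ℝ → ℝ := fun y => ∫ z in a..y, exp (β * z) * G z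
  have hP : ∀ y, HasDerivAt P (exp (β * y) * G y) y := hasDerivAt_primitive (by fun_prop) a
  have hPa : ∀ y ≤ a, P y = 0 := fun y => primitive_eq_zero (by simp +contextual [hGa]) le_rfl
  have hP0 : ∀ y, 0 ≤ P y := primitive_nonneg (by simp +contextual [hGa])
    fun z => mul_nonneg (exp_pos _).le (hG0 z)
  have hcancel : ∀ y, exp (-β * y) * exp (β * y) = 1 := fun y => by
    rw [← exp_add, neg_mul, neg_add_cancel, exp_zero]
  have hR : ∀ y, HasDerivAt (fun y => exp (β * y) * G y - β * P y) (exp (β * y) * Q y) y :=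
    fun y => (((hexp β y).mul (hG y)).sub ((hP y).const_mul β)).congr_deriv (by ring)
  have hRmono : Monotone fun y => exp (β * y) * G y - β * P y :=
    monotone_of_deriv_nonneg (fun y => (hR y).differentiableAt)
      fun y => (hR y).deriv ▸ mul_nonneg (exp_pos _).le (hQ0 y)
  refine ⟨fun y => exp (-β * y) * P y, fun y => ?_, fun y hy => by simp [hPa y hy],
    fun y => mul_nonneg (exp_pos _).le (hP0 y), fun y => ?_⟩
  · exact ((hexp (-β) y).mul (hP y)).congr_deriv (by linear_combination G y * hcancel y)
  · have hR0 : 0 ≤ exp (β * y) * G y - β * P y := by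
      simpa [hGa _ (min_le_right y a), hPa _ (min_le_right y a)] using hRmono (min_le_left y a)
    linear_combination exp (-β * y) * hR0 + G y * hcancel y

lemma exists_damped_potential {Q : ℝ → ℝ} {β a : ℝ} (hβ : 0 ≤ β) (hQ : Continuous Q)
    (hQc : HasCompactSupport Q) (hQ0 : 0 ≤ Q) (hQa : ∀ y ≤ a, Q y = 0) :
    ∃ θ : ℝ → ℝ, ∃ M : ℝ, ContDiff ℝ 2 θ ∧ (∀ y ≤ a, θ y = 0) ∧ 0 ≤ θ ∧
      (∀ y, deriv θ y ∈ Icc 0 M ∧ β * θ y ≤ M) ∧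
      ∀ y, deriv (deriv θ) y + β * deriv θ y = Q y := by
  set G : ℝ → ℝ := fun y => ∫ z in a..y, Q z
  have hG : ∀ y, HasDerivAt G (Q y) y := hasDerivAt_primitive hQ a
  have hGa : ∀ y ≤ a, G y = 0 := fun y => primitive_eq_zero hQa le_rfl
  have hGle : ∀ y, G y ≤ ∫ z, Q z := fun y => by
    rcases le_total y a with hy | hy
    · exact (hGa y hy).trans_le (integral_nonneg hQ0)
    · exact (intervalIntegral.integral_of_le hy).trans_le
        (setIntegral_le_integral (hQ.integrable_of_hasCompactSupport hQc) (ae_of_all _ hQ0))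
  obtain ⟨θ, hθ, hθa, hθ0, hθG⟩ := exists_damped_primitive (β := β) hG hQ0 hGa
  have hθ' : ∀ y, HasDerivAt (fun y => G y - β * θ y) (Q y - β * (G y - β * θ y)) y :=
    fun y => (hG y).sub ((hθ y).const_mul β)
  have hderiv : deriv θ = fun y => G y - β * θ y := funext fun y => (hθ y).deriv
  have hcont : Continuous θ := continuous_iff_continuousAt.2 fun y => (hθ y).continuousAt
  have hGcont : Continuous G := continuous_iff_continuousAt.2 fun y => (hG y).continuousAt
  refine ⟨θ, ∫ z, Q z, contDiff_two_of_hasDerivAt hθ (contDiff_one_iff_deriv.2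
    ⟨fun y => (hθ' y).differentiableAt, ?_⟩), hθa, hθ0, fun y => ⟨⟨?_, ?_⟩, ?_⟩, fun y => ?_⟩
  · rw [funext fun y => (hθ' y).deriv]
    fun_prop
  · rw [hderiv]
    exact sub_nonneg.2 (hθG y)
  · rw [hderiv]
    linarith [hGle y, mul_nonneg hβ (hθ0 y)]
  · exact (hθG y).trans (hGle y)
  · rw [hderiv, (hθ' y).deriv]
    ring

end OneVariable

section LineLiouville

/-- The operator `k ↦ k'' + β k'` on functions of one real variable. It is what the Hardy operator
of a cone becomes in the variable `log ‖x‖`, once the angular ground state and a power of `‖x‖`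
have been factored out. -/
def dampedOp (β : ℝ) (k : ℝ → ℝ) (y : ℝ) : ℝ := deriv (deriv k) y + β * deriv k y

lemma continuous_dampedOp {k : ℝ → ℝ} (hk : ContDiff ℝ 2 k) (β : ℝ) :
    Continuous (dampedOp β k) := by
  have hk' : ContDiff ℝ 1 (deriv k) := hk.deriv'
  exact (hk'.continuous_deriv le_rfl).add (continuous_const.mul hk'.continuous)

lemma dampedOp_eq_zero_of_eventuallyEq_zero {k : ℝ → ℝ} {y : ℝ} (hk : k =ᶠ[𝓝 y] fun _ => 0)
    (β : ℝ) : dampedOp β k y = 0 := by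
  rw [dampedOp, (deriv_eventuallyEq_const hk).1, (deriv_eventuallyEq_const hk).2]
  simp

lemma hasCompactSupport_dampedOp {k : ℝ → ℝ} (hk : HasCompactSupport k) (β : ℝ) :
    HasCompactSupport (dampedOp β k) :=
  hk.mono' fun _ hy => not_imp_comm.1
    (fun hy' => dampedOp_eq_zero_of_eventuallyEq_zero (notMem_tsupport_iff_eventuallyEq.1 hy') β) hy

lemma dampedOp_mul {θ χ : ℝ → ℝ} (hθ : ContDiff ℝ 2 θ) (hχ : ContDiff ℝ 2 χ) (β y : ℝ) :
    dampedOp β (fun z => θ z * χ z) y = dampedOp β θ y * χ y +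
      ((2 * deriv θ y + β * θ y) * deriv χ y + θ y * deriv (deriv χ) y) := by
  have hD : ∀ {f : ℝ → ℝ}, ContDiff ℝ 2 f → ∀ z, HasDerivAt f (deriv f z) z := fun hf z =>
    (hf.differentiable (by norm_num) z).hasDerivAt
  have hD' : ∀ {f : ℝ → ℝ}, ContDiff ℝ 2 f → ∀ z, HasDerivAt (deriv f) (deriv (deriv f) z) z :=
    fun hf z => ((ContDiff.deriv' (n := 1) hf).differentiable one_ne_zero z).hasDerivAt
  have hderiv : deriv (fun z => θ z * χ z) = fun z => deriv θ z * χ z + θ z * deriv χ z :=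
    funext fun z => ((hD hθ z).mul (hD hχ z)).deriv
  have hderiv2 : deriv (fun z => deriv θ z * χ z + θ z * deriv χ z) y =
      deriv (deriv θ) y * χ y + deriv θ y * deriv χ y +
        (deriv θ y * deriv χ y + θ y * deriv (deriv χ) y) :=
    (((hD' hθ y).mul (hD hχ y)).add ((hD hθ y).mul (hD' hχ y))).deriv
  simp only [dampedOp, hderiv, hderiv2]
  ring

lemma abs_cutoff_error_le {M B T a b c d e : ℝ} (hT : 0 < T) (ha : a ∈ Icc 0 M)
    (hb : b ∈ Icc 0 M) (hc : c ∈ Icc 0 (3 * T * M)) (hd : |d| ≤ B / T) (he : |e| ≤ B / T ^ 2) :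
    |(2 * a + b) * d + c * e| ≤ 6 * M * B / T := by
  calc |(2 * a + b) * d + c * e| ≤ (2 * a + b) * |d| + c * |e| := by
        refine (abs_add_le _ _).trans_eq ?_
        rw [abs_mul, abs_mul, abs_of_nonneg hc.1, abs_of_nonneg (by linarith [ha.1, hb.1])]
    _ ≤ (3 * M) * (B / T) + (3 * T * M) * (B / T ^ 2) := by
        have hM : 0 ≤ M := ha.1.trans ha.2
        gcongr
        · linarith [ha.2, hb.2]
        · exact hc.2
    _ = 6 * M * B / T := by field_simp; ring

lemma le_of_deriv_mem_Icc {θ : ℝ → ℝ} {a M T y : ℝ} (hθ : Differentiable ℝ θ)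
    (hθa : ∀ z ≤ a, θ z = 0) (hθ' : ∀ z, deriv θ z ∈ Icc 0 M) (haT : |a| ≤ T) (hy : y ≤ 2 * T) :
    θ y ≤ 3 * T * M := by
  have hM : 0 ≤ M := (hθ' 0).1.trans (hθ' 0).2
  rcases le_total y a with h | h
  · rw [hθa y h]
    exact mul_nonneg (by linarith [abs_nonneg a]) hM
  · have hslope := image_sub_le_mul_sub_of_deriv_le hθ (fun z => (hθ' z).2) h
    rw [hθa a le_rfl, sub_zero] at hslope
    exact hslope.trans (by nlinarith [neg_abs_le a])

/- The bounded-slope solution of `θ'' + βθ' = Q` is `O(T)` at scale `T`, so cutting it off there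
costs only `O(1/T)`. -/
lemma exists_dampedOp_ge {Q : ℝ → ℝ} {β a : ℝ} (hβ : 0 ≤ β) (hQ : Continuous Q)
    (hQc : HasCompactSupport Q) (hQ0 : 0 ≤ Q) (hQa : ∀ y ≤ a, Q y = 0) :
    ∃ C : ℝ, ∀ᶠ T in atTop, ∃ k : ℝ → ℝ, ContDiff ℝ 2 k ∧ HasCompactSupport k ∧
      tsupport k ⊆ Ici a ∧ 0 ≤ k ∧
      ∀ y, Q y - (Iic (2 * T)).indicator (fun _ => C / T) y ≤ dampedOp β k y := by
  obtain ⟨θ, M, hθ, hθa, hθ0, hbound, hθQ⟩ := exists_damped_potential hβ hQ hQc hQ0 hQa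
  obtain ⟨B, hcutoff⟩ := exists_smooth_cutoff
  obtain ⟨b, hb⟩ := hQc.bddAbove
  have hQb : ∀ y, b < y → Q y = 0 := fun y hy =>
    image_eq_zero_of_notMem_tsupport fun h => hy.not_ge (hb h)
  refine ⟨6 * M * B, ?_⟩
  filter_upwards [eventually_gt_atTop 0, eventually_ge_atTop |a|, eventually_ge_atTop b]
    with T hT haT hbT
  obtain ⟨χ, hχ, hχ1, hχ0, hχnonneg, hχb⟩ := hcutoff T hT
  have hsupp : ∀ y ∉ Icc a (2 * T), θ y * χ y = 0 := fun y hy => by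
    rcases lt_or_ge y a with h | h
    · rw [hθa y h.le, zero_mul]
    · rw [hχ0 y (not_le.1 fun h2 => hy ⟨h, h2⟩).le, mul_zero]
  have htsupp : tsupport (fun y => θ y * χ y) ⊆ Icc a (2 * T) :=
    closure_minimal (fun y hy => not_imp_comm.1 (hsupp y) hy) isClosed_Icc
  refine ⟨fun y => θ y * χ y, hθ.mul hχ, HasCompactSupport.intro isCompact_Icc hsupp,
    htsupp.trans Icc_subset_Ici_self, fun y => mul_nonneg (hθ0 y) (hχnonneg y), fun y => ?_⟩
  rcases le_or_gt y (2 * T) with hy | hy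
  · have hQχ : Q y * χ y = Q y := by
      rcases le_or_gt y T with h | h
      · rw [hχ1 y h, mul_one]
      · rw [hQb y (hbT.trans_lt h), zero_mul]
    have hθle : θ y ≤ 3 * T * M := le_of_deriv_mem_Icc (hθ.differentiable (by norm_num)) hθa
      (fun z => (hbound z).1) haT hy
    have herror := abs_le.1 (abs_cutoff_error_le hT (hbound y).1
      ⟨mul_nonneg hβ (hθ0 y), (hbound y).2⟩ ⟨hθ0 y, hθle⟩ (hχb y).1 (hχb y).2)
    rw [dampedOp_mul hθ hχ, dampedOp, hθQ, hQχ, indicator_of_mem (mem_Iic.2 hy)]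
    linarith [herror.1]
  · have hzero : (fun y => θ y * χ y) =ᶠ[𝓝 y] fun _ => 0 :=
      eventually_of_mem (Ioi_mem_nhds hy) fun z hz => hsupp z fun h => hz.not_ge h.2
    rw [dampedOp_eq_zero_of_eventuallyEq_zero hzero, hQb y (by linarith),
      indicator_of_notMem (notMem_Iic.2 hy), sub_zero]

lemma exists_bump_Ioo (a b : ℝ) : ∃ Q : ℝ → ℝ, Continuous Q ∧ HasCompactSupport Q ∧ 0 ≤ Q ∧
    (∀ y ≤ a, Q y = 0) ∧ ∀ y ∈ Ioo a b, 0 < Q y := by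
  refine ⟨fun y => max 0 (y - a) * max 0 (b - y), by fun_prop,
    HasCompactSupport.intro (isCompact_Icc (a := a) (b := b)) fun y hy => ?_,
    fun y => by positivity, fun y hy => by simp [hy], fun y hy => ?_⟩
  · rcases lt_or_ge y a with h | h
    · simp [h.le]
    · simp [(not_le.1 fun h2 => hy ⟨h, h2⟩).le]
  · exact mul_pos (lt_max_of_lt_right (sub_pos.2 hy.1)) (lt_max_of_lt_right (sub_pos.2 hy.2))

variable {ν : Measure ℝ} {β s : ℝ}

lemma integral_eq_zero_of_integral_dampedOp_nonpos [IsFiniteMeasureOnCompacts ν] (hβ : 0 ≤ β)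
    (hfin : ∀ T, ν (Iic T) ≠ ⊤) (hgrowth : Tendsto (fun T => ν.real (Iic T) / T) atTop (𝓝 0))
    (htest : ∀ k : ℝ → ℝ, ContDiff ℝ 2 k → HasCompactSupport k → tsupport k ⊆ Ioi s → 0 ≤ k →
      ∫ y, dampedOp β k y ∂ν ≤ 0) {Q : ℝ → ℝ} (hQ : Continuous Q) (hQc : HasCompactSupport Q)
    (hQ0 : 0 ≤ Q) {a : ℝ} (ha : s < a) (hQa : ∀ y ≤ a, Q y = 0) : ∫ y, Q y ∂ν = 0 := by
  obtain ⟨C, hC⟩ := exists_dampedOp_ge hβ hQ hQc hQ0 hQa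
  have hQle : ∀ᶠ T in atTop, ∫ y, Q y ∂ν ≤ 2 * C * (ν.real (Iic (2 * T)) / (2 * T)) := by
    filter_upwards [hC] with T ⟨k, hk, hkc, hks, hk0, hle⟩
    have hQint : Integrable Q ν := hQ.integrable_of_hasCompactSupport hQc
    have hind : Integrable ((Iic (2 * T)).indicator fun _ => C / T) ν :=
      (integrableOn_const (hfin _)).integrable_indicator measurableSet_Iic
    have hLint : Integrable (dampedOp β k) ν :=
      (continuous_dampedOp hk β).integrable_of_hasCompactSupport (hasCompactSupport_dampedOp hkc β)
    have hnonpos := (integral_mono (hQint.sub hind) hLint hle).trans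
      (htest k hk hkc (hks.trans (Ici_subset_Ioi.2 ha)) hk0)
    rw [integral_sub' hQint hind, integral_indicator measurableSet_Iic, setIntegral_const,
      smul_eq_mul, sub_nonpos] at hnonpos
    exact hnonpos.trans_eq (by field_simp)
  have hlim : Tendsto (fun T : ℝ => 2 * C * (ν.real (Iic (2 * T)) / (2 * T))) atTop (𝓝 0) := by
    simpa using (hgrowth.comp (tendsto_id.const_mul_atTop two_pos)).const_mul (2 * C)
  exact (ge_of_tendsto hlim hQle).antisymm (integral_nonneg hQ0)

theorem measure_Ioi_eq_zero_of_integral_dampedOp_nonpos (hβ : 0 ≤ β) (hfin : ∀ T, ν (Iic T) ≠ ⊤)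
    (hgrowth : Tendsto (fun T => ν.real (Iic T) / T) atTop (𝓝 0))
    (htest : ∀ k : ℝ → ℝ, ContDiff ℝ 2 k → HasCompactSupport k → tsupport k ⊆ Ioi s → 0 ≤ k →
      ∫ y, dampedOp β k y ∂ν ≤ 0) : ν (Ioi s) = 0 := by
  have : IsFiniteMeasureOnCompacts ν := ⟨fun K hK => by
    obtain ⟨T, hT⟩ := hK.bddAbove
    exact (measure_mono hT).trans_lt (hfin T).lt_top⟩
  refine measure_null_of_locally_null _ fun x hx => ?_
  obtain ⟨a, hsa, hax⟩ := exists_between (mem_Ioi.1 hx)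
  refine ⟨Ioo a (x + 1), mem_nhdsWithin_of_mem_nhds (Ioo_mem_nhds hax (lt_add_one x)), ?_⟩
  obtain ⟨Q, hQ, hQc, hQ0, hQa, hQpos⟩ := exists_bump_Ioo a (x + 1)
  have hzero :=
    integral_eq_zero_of_integral_dampedOp_nonpos hβ hfin hgrowth htest hQ hQc hQ0 hsa hQa
  rw [integral_eq_zero_iff_of_nonneg hQ0 (hQ.integrable_of_hasCompactSupport hQc)] at hzero
  exact measure_mono_null (fun y hy => (hQpos y hy).ne') hzero

end LineLiouville

section Cone

variable {N : ℕ} {Ω : Set (Euc N)} {ρ : ℝ}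

lemma lap_eq_laplacian (u : Euc N → ℝ) : lap N u = Δ u := by
  ext x
  simp [lap, laplacian_eq_iteratedFDeriv_orthonormalBasis u (EuclideanSpace.basisFun (Fin N) ℝ)]

lemma norm_rpow_neg_two (x : Euc N) : ‖x‖ ^ (-(2:ℝ)) = (‖x‖ ^ 2)⁻¹ := by
  rw [rpow_neg (norm_nonneg x), rpow_two]

lemma norm_inv_norm_smul {x : Euc N} (hx : x ≠ 0) : ‖‖x‖⁻¹ • x‖ = 1 := by
  rw [norm_smul, norm_inv, norm_norm, inv_mul_cancel₀ (norm_ne_zero_iff.2 hx)]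

lemma exp_log_norm_smul {x : Euc N} (hx : x ≠ 0) : exp (log ‖x‖) • ‖x‖⁻¹ • x = x := by
  rw [exp_log (norm_pos_iff.2 hx), smul_inv_smul₀ (norm_ne_zero_iff.2 hx)]

lemma isOpen_cone (hΩ : IsOpen {ω : Metric.sphere (0 : Euc N) 1 | (ω : Euc N) ∈ Ω}) :
    IsOpen (cone N Ω) := by
  obtain ⟨V, hV, hVΩ⟩ := isOpen_induced_iff.1 hΩ
  have hcone : cone N Ω = {0}ᶜ ∩ (fun x : Euc N => ‖x‖⁻¹ • x) ⁻¹' V := by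
    ext x
    refine and_congr_right fun hx => ?_
    exact (Set.ext_iff.1 hVΩ ⟨_, mem_sphere_zero_iff_norm.2 (norm_inv_norm_smul hx)⟩).symm
  rw [hcone]
  refine ContinuousOn.isOpen_inter_preimage (fun x hx => ?_) isOpen_compl_singleton hV
  exact ((continuousAt_id.norm.inv₀ (norm_ne_zero_iff.2 hx)).smul
    continuousAt_id).continuousWithinAt

lemma coneGT_subset_cone (hρ : 0 ≤ ρ) : coneGT N ρ Ω ⊆ cone N Ω := fun _ hx =>
  ⟨norm_pos_iff.1 (hρ.trans_lt hx.1), hx.2⟩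

lemma isOpen_coneGT (hΩ : IsOpen (cone N Ω)) (hρ : 0 ≤ ρ) : IsOpen (coneGT N ρ Ω) := by
  have : coneGT N ρ Ω = {x | ρ < ‖x‖} ∩ cone N Ω :=
    (subset_inter (fun _ hx => hx.1) (coneGT_subset_cone hρ)).antisymm
      fun _ hx => ⟨hx.1, hx.2.2⟩
  rw [this]
  exact (isOpen_lt continuous_const continuous_norm).inter hΩ

variable {φ : Euc N → ℝ} {lam1 : ℝ}

lemma DirichletEigenpair.laplacian_angularExt (h : DirichletEigenpair N Ω lam1 φ) {x : Euc N}
    (hx : x ∈ cone N Ω) : Δ (angularExt φ) x = -lam1 * (‖x‖ ^ 2)⁻¹ * angularExt φ x := by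
  rw [← norm_rpow_neg_two, ← lap_eq_laplacian]
  exact h.eigen x hx

lemma DirichletEigenpair.isCompact_superlevel (h : DirichletEigenpair N Ω lam1 φ)
    (hΩ : Ω ⊆ Metric.sphere 0 1) (ε : ℝ) : IsCompact {ω ∈ closure Ω | ε ≤ φ ω} :=
  (isCompact_sphere (0 : Euc N) 1).of_isClosed_subset
    (h.contOn.preimage_isClosed_of_isClosed isClosed_closure isClosed_Ici)
    fun _ hω => closure_minimal hΩ Metric.isClosed_sphere hω.1

lemma DirichletEigenpair.exists_isCompact_subset_coneGT (h : DirichletEigenpair N Ω lam1 φ)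
    (hΩ : Ω ⊆ Metric.sphere 0 1) (hρ : 0 < ρ) {A : Set ℝ} (hA : IsCompact A)
    (hAρ : A ⊆ Ioi (log ρ)) {ε : ℝ} (hε : 0 < ε) :
    ∃ K ⊆ coneGT N ρ Ω, IsCompact K ∧
      ∀ x ∈ coneGT N ρ Ω, log ‖x‖ ∈ A → ε ≤ angularExt φ x → x ∈ K := by
  refine ⟨(fun z : ℝ × Euc N => exp z.1 • z.2) '' (A ×ˢ {ω ∈ closure Ω | ε ≤ φ ω}), ?_,
    (hA.prod (h.isCompact_superlevel hΩ ε)).image (by fun_prop), fun x hx hxA hxε => ?_⟩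
  · rintro _ ⟨⟨t, ω⟩, ⟨ht, hω, hεω⟩, rfl⟩
    have hωΩ : ω ∈ Ω := by_contra fun hn => (hε.trans_le hεω).ne' (h.bdryZero ω ⟨hω, hn⟩)
    have hnorm : ‖exp t • ω‖ = exp t := by
      rw [norm_smul, mem_sphere_zero_iff_norm.1 (hΩ hωΩ), mul_one, norm_of_nonneg (exp_pos t).le]
    refine ⟨?_, ?_⟩
    · rw [hnorm]
      exact (log_lt_iff_lt_exp hρ).1 (hAρ ht)
    · rwa [hnorm, inv_smul_smul₀ (exp_pos t).ne']
  · exact ⟨(log ‖x‖, ‖x‖⁻¹ • x), ⟨hxA, subset_closure hx.2, hxε⟩,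
      exp_log_norm_smul (coneGT_subset_cone hρ.le hx).1⟩

end Cone

section WeakInequality

/-- `v` is a positive classical supersolution on `U` of the Hardy operator `-Δ - μ|x|⁻²`. -/
structure IsPosHardySupersolution {N : ℕ} (μ : ℝ) (U : Set (Euc N)) (v : Euc N → ℝ) : Prop where
  contDiffOn : ContDiffOn ℝ 2 v U
  pos : ∀ x ∈ U, 0 < v x
  laplacian_add_nonpos : ∀ x ∈ U, Δ v x + μ * (‖x‖ ^ 2)⁻¹ * v x ≤ 0

variable {N : ℕ} {Ω : Set (Euc N)} {ρ lam1 μ κ : ℝ} {φ : Euc N → ℝ} {k F : ℝ → ℝ}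

lemma hasDerivAt_exp_mul_mul {f : ℝ → ℝ} {f' t : ℝ} (hf : HasDerivAt f f' t) (κ : ℝ) :
    HasDerivAt (fun t => exp (κ * t) * f t) (exp (κ * t) * (f' + κ * f t)) t := by
  have hexp : HasDerivAt (fun t => exp (κ * t)) (exp (κ * t) * κ) t := by
    simpa using ((hasDerivAt_id t).const_mul κ).exp
  exact (hexp.mul hf).congr_deriv (by ring)

lemma radial_ode_exp_mul (hk : ContDiff ℝ 2 k) (κ m t : ℝ) :
    deriv (deriv fun t => exp (κ * t) * k t) t + m * deriv (fun t => exp (κ * t) * k t) t =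
      exp (κ * t) * (dampedOp (2 * κ + m) k t + κ * (κ + m) * k t) := by
  have hk' : ContDiff ℝ 1 (deriv k) := hk.deriv'
  have hD : ∀ t, HasDerivAt k (deriv k t) t := fun t =>
    (hk.differentiable two_ne_zero t).hasDerivAt
  have hD' : HasDerivAt (deriv k) (deriv (deriv k) t) t :=
    (hk'.differentiable one_ne_zero t).hasDerivAt
  have hsum : HasDerivAt (fun t => deriv k t + κ * k t)
      (deriv (deriv k) t + κ * deriv k t) t := hD'.add ((hD t).const_mul κ)
  rw [funext fun t => (hasDerivAt_exp_mul_mul (hD t) κ).deriv,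
    (hasDerivAt_exp_mul_mul hsum κ).deriv, dampedOp]
  ring

lemma hardy_separated (hΩ : IsOpen (cone N Ω)) (hφ : DirichletEigenpair N Ω lam1 φ)
    (hκ : κ * (κ + (N - 2)) = lam1 - μ) (hk : ContDiff ℝ 2 k) (hF : ContDiff ℝ 2 F)
    {x : Euc N} (hx : x ∈ cone N Ω) :
    Δ (fun y => exp (κ * log ‖y‖) * k (log ‖y‖) * F (angularExt φ y)) x +
        μ * (‖x‖ ^ 2)⁻¹ * (exp (κ * log ‖x‖) * k (log ‖x‖) * F (angularExt φ x)) =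
      exp (κ * log ‖x‖) * (‖x‖ ^ 2)⁻¹ *
          (dampedOp (2 * κ + (N - 2)) k (log ‖x‖) * F (angularExt φ x) -
            lam1 * k (log ‖x‖) * (angularExt φ x * deriv F (angularExt φ x) - F (angularExt φ x)))
        + exp (κ * log ‖x‖) * k (log ‖x‖) *
          (deriv (deriv F) (angularExt φ x) * ‖∇ (angularExt φ) x‖ ^ 2) := by
  have hG : ContDiff ℝ 2 fun t => exp (κ * t) * k t := by fun_prop
  rw [laplacian_separated (G := fun t => exp (κ * t) * k t) (H := F) hx.1
    (hφ.smoothExt.contDiffAt (hΩ.mem_nhds hx)) hG.contDiffAt hF.contDiffAt,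
    finrank_euclideanSpace_fin, radial_ode_exp_mul hk, hφ.laplacian_angularExt hx]
  linear_combination (‖x‖ ^ 2)⁻¹ * exp (κ * log ‖x‖) * k (log ‖x‖) * F (angularExt φ x) * hκ

lemma hardy_separated_ge (hΩ : IsOpen (cone N Ω)) (hφ : DirichletEigenpair N Ω lam1 φ)
    (hκ : κ * (κ + (N - 2)) = lam1 - μ) (hk : ContDiff ℝ 2 k) (hk0 : 0 ≤ k)
    (hF : ContDiff ℝ 2 F) {x : Euc N} (hx : x ∈ cone N Ω) {δ : ℝ}
    (hF'' : 0 ≤ deriv (deriv F) (angularExt φ x))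
    (hFδ : F (angularExt φ x) ∈ Icc (angularExt φ x - δ) (angularExt φ x))
    (hF'δ : angularExt φ x * deriv F (angularExt φ x) - F (angularExt φ x) ∈ Icc 0 δ) :
    exp (κ * log ‖x‖) * (‖x‖ ^ 2)⁻¹ *
        (angularExt φ x * dampedOp (2 * κ + (N - 2)) k (log ‖x‖) -
          δ * (|dampedOp (2 * κ + (N - 2)) k (log ‖x‖)| + |lam1| * k (log ‖x‖))) ≤
      Δ (fun y => exp (κ * log ‖y‖) * k (log ‖y‖) * F (angularExt φ y)) x +
        μ * (‖x‖ ^ 2)⁻¹ * (exp (κ * log ‖x‖) * k (log ‖x‖) * F (angularExt φ x)) := by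
  rw [hardy_separated hΩ hφ hκ hk hF hx]
  have hkx : 0 ≤ k (log ‖x‖) := hk0 _
  refine le_add_of_le_of_nonneg (mul_le_mul_of_nonneg_left ?_ (by positivity)) (by positivity)
  set L := dampedOp (2 * κ + (N - 2)) k (log ‖x‖)
  have hL : |L * (angularExt φ x - F (angularExt φ x))| ≤ |L| * δ := by
    rw [abs_mul, abs_of_nonneg (sub_nonneg.2 hFδ.2)]
    gcongr
    linarith [hFδ.1]
  have hlam : |lam1 * (angularExt φ x * deriv F (angularExt φ x) - F (angularExt φ x))| ≤
      |lam1| * δ := by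
    rw [abs_mul, abs_of_nonneg hF'δ.1]
    gcongr
    exact hF'δ.2
  linear_combination (le_abs_self _).trans hL + k (log ‖x‖) * (le_abs_self _).trans hlam

lemma exists_testFunction_eqOn_separated (hΩs : Ω ⊆ Metric.sphere 0 1) (hΩ : IsOpen (cone N Ω))
    (hφ : DirichletEigenpair N Ω lam1 φ) (hρ : 0 < ρ) (hk : ContDiff ℝ 2 k)
    (hkc : HasCompactSupport k) (hks : tsupport k ⊆ Ioi (log ρ)) (hF : ContDiff ℝ 2 F) {ε : ℝ}
    (hε : 0 < ε) (hFε : ∀ y ≤ ε, F y = 0) :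
    ∃ ψ : Euc N → ℝ, ContDiff ℝ 2 ψ ∧ HasCompactSupport ψ ∧ tsupport ψ ⊆ coneGT N ρ Ω ∧
      (∀ x ∉ coneGT N ρ Ω, ψ x = 0) ∧
      EqOn ψ (fun x => exp (κ * log ‖x‖) * k (log ‖x‖) * F (angularExt φ x)) (coneGT N ρ Ω) := by
  set g : Euc N → ℝ := fun x => exp (κ * log ‖x‖) * k (log ‖x‖) * F (angularExt φ x)
  have hU := isOpen_coneGT hΩ hρ.le
  have hg : ContDiffOn ℝ 2 g (coneGT N ρ Ω) := fun x hx => by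
    have hlog : ContDiffAt ℝ 2 (fun y : Euc N => log ‖y‖) x :=
      contDiffAt_log_norm (coneGT_subset_cone hρ.le hx).1
    have hΦ : ContDiffAt ℝ 2 (angularExt φ) x :=
      hφ.smoothExt.contDiffAt (hΩ.mem_nhds (coneGT_subset_cone hρ.le hx))
    exact (((contDiffAt_const.mul hlog).exp.mul (hk.contDiffAt.comp x hlog)).mul
      (hF.contDiffAt.comp x hΦ)).contDiffWithinAt
  obtain ⟨K, hKU, hK, hmem⟩ := hφ.exists_isCompact_subset_coneGT hΩs hρ hkc.isCompact hks hε
  have hg0 : ∀ x ∈ coneGT N ρ Ω \ K, g x = 0 := fun x hx => by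
    by_cases hxk : log ‖x‖ ∈ tsupport k
    · have hxε : angularExt φ x ≤ ε := (not_le.1 fun h => hx.2 (hmem x hx.1 hxk h)).le
      simp only [g, hFε _ hxε, mul_zero]
    · simp only [g, image_eq_zero_of_notMem_tsupport hxk, mul_zero, zero_mul]
  have hsupp := tsupport_indicator_subset_of_isClosed hK.isClosed hg0
  exact ⟨(coneGT N ρ Ω).indicator g, contDiff_indicator_of_isClosed hU hK.isClosed hKU hg hg0,
    hK.of_isClosed_subset (isClosed_tsupport _) hsupp, hsupp.trans hKU,
    fun x hx => indicator_of_notMem hx g, eqOn_indicator⟩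

/-- The weight `v(x)|x|^(κ-2)` that a supersolution `v` induces when it is tested against
separated functions `|x|^κ k(log|x|) F(Φ(x))`. -/
def hardyWeight (κ : ℝ) (v : Euc N → ℝ) (x : Euc N) : ℝ :=
  v x * (exp (κ * log ‖x‖) * (‖x‖ ^ 2)⁻¹)

lemma IsPosHardySupersolution.setIntegral_truncated_nonpos {v : Euc N → ℝ}
    (hv : IsPosHardySupersolution μ (coneGT N ρ Ω) v) (hΩs : Ω ⊆ Metric.sphere 0 1)
    (hΩ : IsOpen (cone N Ω)) (hφ : DirichletEigenpair N Ω lam1 φ)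
    (hκ : κ * (κ + (N - 2)) = lam1 - μ) (hρ : 0 < ρ) (hk : ContDiff ℝ 2 k)
    (hkc : HasCompactSupport k) (hks : tsupport k ⊆ Ioi (log ρ)) (hk0 : 0 ≤ k) {ε : ℝ} (hε : 0 < ε)
    (hint : IntegrableOn (fun x => hardyWeight κ v x *
      (angularExt φ x * dampedOp (2 * κ + (N - 2)) k (log ‖x‖) - 2 * ε *
      (|dampedOp (2 * κ + (N - 2)) k (log ‖x‖)| + |lam1| * k (log ‖x‖)))) (coneGT N ρ Ω)) :
    ∫ x in coneGT N ρ Ω, hardyWeight κ v x *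
      (angularExt φ x * dampedOp (2 * κ + (N - 2)) k (log ‖x‖) - 2 * ε *
      (|dampedOp (2 * κ + (N - 2)) k (log ‖x‖)| + |lam1| * k (log ‖x‖))) ≤ 0 := by
  have hU := isOpen_coneGT hΩ hρ.le
  obtain ⟨F, hF, hFε, hF0, hF'', hFbound⟩ := exists_convex_truncation hε
  obtain ⟨ψ, hψ, hψc, hψs, hψ0, hψeq⟩ :=
    exists_testFunction_eqOn_separated (κ := κ) hΩs hΩ hφ hρ hk hkc hks hF hε hFε
  have hc : ContinuousOn (fun x : Euc N => μ * (‖x‖ ^ 2)⁻¹) (coneGT N ρ Ω) := fun x hx =>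
    (continuousAt_const.mul ((continuousAt_id.norm.pow 2).inv₀ (pow_ne_zero 2
      (norm_ne_zero_iff.2 (coneGT_subset_cone hρ.le hx).1)))).continuousWithinAt
  have hψnonneg : 0 ≤ ψ := fun x => by
    by_cases hx : x ∈ coneGT N ρ Ω
    · rw [hψeq hx]
      exact mul_nonneg (mul_nonneg (exp_pos _).le (hk0 _)) (hF0 _)
    · exact (hψ0 x hx).ge
  have hvanish : ∀ x ∉ coneGT N ρ Ω, v x * (Δ ψ x + μ * (‖x‖ ^ 2)⁻¹ * ψ x) = 0 := fun x hx => by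
    rw [image_eq_zero_of_notMem_tsupport fun h => hx (hψs (tsupport_laplacian_subset ψ h)),
      hψ0 x hx, mul_zero, add_zero, mul_zero]
  refine (setIntegral_mono_on hint (integrable_mul_laplacian_add hU hv.contDiffOn.continuousOn hc
    hψ hψc hψs).integrableOn hU.measurableSet fun x hx => ?_).trans ?_
  · have hΦ : 0 ≤ angularExt φ x := (hφ.pos _ hx.2).le
    rw [(laplacian_congr_nhds (hψeq.eventuallyEq_of_mem (hU.mem_nhds hx))).eq_of_nhds, hψeq hx]
    rw [hardyWeight, mul_assoc]
    exact mul_le_mul_of_nonneg_left (hardy_separated_ge hΩ hφ hκ hk hk0 hF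
      (coneGT_subset_cone hρ.le hx) (hF'' _) (hFbound _ hΦ).1 (hFbound _ hΦ).2) (hv.pos x hx).le
  rw [setIntegral_eq_integral_of_forall_compl_eq_zero hvanish]
  exact integral_mul_laplacian_add_nonpos hU hv.contDiffOn hc hv.laplacian_add_nonpos hψ hψc hψs
    hψnonneg

lemma integrableOn_mul_comp_log_norm {S : Set (Euc N)} {W : Euc N → ℝ} (hS : MeasurableSet S)
    (hW : ∀ T, IntegrableOn W (S ∩ {x | log ‖x‖ ≤ T})) {h : ℝ → ℝ} (hh : Continuous h)
    (hhc : HasCompactSupport h) : IntegrableOn (fun x => W x * h (log ‖x‖)) S := by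
  obtain ⟨b, hb⟩ := hhc.bddAbove
  obtain ⟨C, hC⟩ := hh.bounded_above_of_compact_support hhc
  have hmeas : Measurable fun x : Euc N => h (log ‖x‖) :=
    hh.measurable.comp (measurable_log.comp measurable_norm)
  refine IntegrableOn.of_forall_sdiff_eq_zero (s := S ∩ {x | log ‖x‖ ≤ b})
    ((hW b).mul_bdd hmeas.aestronglyMeasurable (ae_of_all _ fun x => hC _)) hS fun x hx => ?_
  rw [image_eq_zero_of_notMem_tsupport fun h => hx.2 ⟨hx.1, hb h⟩, mul_zero]

lemma DirichletEigenpair.integrableOn_mul_angularExt (hφ : DirichletEigenpair N Ω lam1 φ)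
    (hΩ : IsOpen (cone N Ω)) (hρ : 0 ≤ ρ) {W : Euc N → ℝ} {A : Set (Euc N)}
    (hW : IntegrableOn W (coneGT N ρ Ω ∩ A)) :
    IntegrableOn (fun x => W x * angularExt φ x) (coneGT N ρ Ω ∩ A) := by
  have hS := (isOpen_coneGT hΩ hρ).measurableSet
  have hΦ : AEStronglyMeasurable (angularExt φ) (volume.restrict (coneGT N ρ Ω)) :=
    (hφ.smoothExt.continuousOn.mono (coneGT_subset_cone hρ)).aestronglyMeasurable hS
  have hΦ1 : ∀ᵐ x ∂volume.restrict (coneGT N ρ Ω), ‖angularExt φ x‖ ≤ 1 :=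
    (ae_restrict_iff' hS).2 (ae_of_all _ fun x hx =>
      (norm_of_nonneg (hφ.pos _ hx.2).le).trans_le (hφ.le_one _ (subset_closure hx.2)))
  have hle := Measure.restrict_mono (μ := (volume : Measure (Euc N)))
    (inter_subset_left (s := coneGT N ρ Ω) (t := A)) le_rfl
  exact Integrable.mul_bdd hW (hΦ.mono_measure hle) (ae_mono hle hΦ1)

lemma le_zero_of_forall_le_mul {a b : ℝ} (h : ∀ ε > 0, a ≤ ε * b) : a ≤ 0 := by
  have hlim : Tendsto (fun ε => ε * b) (𝓝[>] 0) (𝓝 0) := by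
    simpa using (tendsto_id.mul_const b).mono_left (nhdsWithin_le_nhds (a := (0 : ℝ)))
  exact ge_of_tendsto hlim (eventually_mem_nhdsWithin.mono h)

lemma IsPosHardySupersolution.setIntegral_dampedOp_nonpos {v : Euc N → ℝ}
    (hv : IsPosHardySupersolution μ (coneGT N ρ Ω) v) (hΩs : Ω ⊆ Metric.sphere 0 1)
    (hΩ : IsOpen (cone N Ω)) (hφ : DirichletEigenpair N Ω lam1 φ)
    (hκ : κ * (κ + (N - 2)) = lam1 - μ) (hρ : 0 < ρ)
    (hint : ∀ T, IntegrableOn (hardyWeight κ v) (coneGT N ρ Ω ∩ {x | log ‖x‖ ≤ T}))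
    (hk : ContDiff ℝ 2 k) (hkc : HasCompactSupport k) (hks : tsupport k ⊆ Ioi (log ρ))
    (hk0 : 0 ≤ k) :
    ∫ x in coneGT N ρ Ω, hardyWeight κ v x * angularExt φ x *
      dampedOp (2 * κ + (N - 2)) k (log ‖x‖) ≤ 0 := by
  have hS := (isOpen_coneGT hΩ hρ.le).measurableSet
  set L := dampedOp (2 * κ + (N - 2)) k
  have hL : Continuous L := continuous_dampedOp hk _
  have hLc : HasCompactSupport L := hasCompactSupport_dampedOp hkc _
  have hmain := integrableOn_mul_comp_log_norm hS
    (fun T => hφ.integrableOn_mul_angularExt hΩ hρ.le (hint T)) hL hLc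
  have herror := integrableOn_mul_comp_log_norm (h := fun t => |L t| + |lam1| * k t) hS hint
    (hL.abs.add (continuous_const.mul hk.continuous))
    ((hLc.comp_left abs_zero).add (hkc.mul_left (f := fun _ => |lam1|)))
  refine le_zero_of_forall_le_mul
    (b := 2 * ∫ x in coneGT N ρ Ω, hardyWeight κ v x * (|L (log ‖x‖)| + |lam1| * k (log ‖x‖)))
    fun ε hε => ?_
  have hsplit : ∀ x, hardyWeight κ v x * (angularExt φ x * L (log ‖x‖) -
      2 * ε * (|L (log ‖x‖)| + |lam1| * k (log ‖x‖))) =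
      hardyWeight κ v x * angularExt φ x * L (log ‖x‖) -
        2 * ε * (hardyWeight κ v x * (|L (log ‖x‖)| + |lam1| * k (log ‖x‖))) := fun x => by ring
  have htrunc := hv.setIntegral_truncated_nonpos hΩs hΩ hφ hκ hρ hk hkc hks hk0 hε
  simp only [L, hsplit] at htrunc hmain herror ⊢
  have h := htrunc (hmain.sub (herror.const_mul (2 * ε)))
  rw [integral_sub hmain (herror.const_mul (2 * ε)), integral_const_mul] at h
  linarith

end WeakInequality

section PushforwardDensity

variable {E : Type*} [MeasurableSpace E] {m : Measure E} {f g : E → ℝ}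

/-- The distribution of the real function `g` under the measure with density `f` (whose negative
part is discarded) with respect to `m`. -/
def densityLaw (m : Measure E) (f g : E → ℝ) : Measure ℝ :=
  (m.withDensity fun x => ENNReal.ofReal (f x)).map g

variable {S : Set E} {A : Set ℝ}

lemma densityLaw_restrict_apply (hg : Measurable g) (hA : MeasurableSet A) :
    densityLaw (m.restrict S) f g A = ∫⁻ x in S ∩ g ⁻¹' A, ENNReal.ofReal (f x) ∂m := by
  rw [densityLaw, Measure.map_apply hg hA, withDensity_apply _ (hg hA),
    Measure.restrict_restrict (hg hA), inter_comm]

lemma densityLaw_restrict_ne_top (hg : Measurable g) (hA : MeasurableSet A)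
    (hf : IntegrableOn f (S ∩ g ⁻¹' A) m) : densityLaw (m.restrict S) f g A ≠ ⊤ := by
  rw [densityLaw_restrict_apply hg hA]
  exact hf.lintegral_lt_top.ne

lemma densityLaw_restrict_real_apply (hg : Measurable g) (hS : MeasurableSet S)
    (hf0 : ∀ x ∈ S, 0 ≤ f x) (hA : MeasurableSet A) (hf : IntegrableOn f (S ∩ g ⁻¹' A) m) :
    (densityLaw (m.restrict S) f g).real A = ∫ x in S ∩ g ⁻¹' A, f x ∂m := by
  have hf0' : 0 ≤ᵐ[m.restrict (S ∩ g ⁻¹' A)] f :=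
    (ae_restrict_mem (hS.inter (hg hA))).mono fun x hx => hf0 x hx.1
  rw [integral_eq_lintegral_of_nonneg_ae hf0' hf.aestronglyMeasurable, measureReal_def,
    densityLaw_restrict_apply hg hA]

lemma densityLaw_restrict_ne_zero (hg : Measurable g) (hS : MeasurableSet S) (hmS : m S ≠ 0)
    (hf : AEMeasurable f (m.restrict S)) (hf0 : ∀ x ∈ S, 0 < f x) (hA : MeasurableSet A)
    (hgA : MapsTo g S A) : densityLaw (m.restrict S) f g A ≠ 0 := by
  rw [densityLaw_restrict_apply hg hA, inter_eq_left.2 (show S ⊆ g ⁻¹' A from hgA)]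
  intro h
  refine hmS (Measure.restrict_eq_zero.1 (ae_eq_bot.1 (eventually_false_iff_eq_bot.1 ?_)))
  filter_upwards [(lintegral_eq_zero_iff' hf.ennreal_ofReal).1 h, ae_restrict_mem hS] with x hx hxS
  exact (ENNReal.ofReal_pos.2 (hf0 x hxS)).ne' hx

lemma integral_densityLaw (hg : Measurable g) (hf : AEMeasurable f m) (hf0 : 0 ≤ᵐ[m] f)
    {k : ℝ → ℝ} (hk : Continuous k) :
    ∫ y, k y ∂densityLaw m f g = ∫ x, f x * k (g x) ∂m := by
  rw [densityLaw, integral_map hg.aemeasurable hk.aestronglyMeasurable,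
    integral_withDensity_eq_integral_toReal_smul₀ hf.ennreal_ofReal
      (ae_of_all _ fun _ => ENNReal.ofReal_lt_top)]
  refine integral_congr_ae (hf0.mono fun x hx => ?_)
  simp only [ENNReal.toReal_ofReal hx, smul_eq_mul]

end PushforwardDensity

section Liouville

variable {N : ℕ} {Ω : Set (Euc N)} {ρ lam1 μ κ : ℝ} {φ v : Euc N → ℝ}

lemma nonempty_coneGT (hΩs : Ω ⊆ Metric.sphere 0 1) (hΩne : Ω.Nonempty) (hρ : 0 < ρ) :
    (coneGT N ρ Ω).Nonempty := by
  obtain ⟨ω, hω⟩ := hΩne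
  have hnorm : ‖(ρ + 1) • ω‖ = ρ + 1 := by
    rw [norm_smul, mem_sphere_zero_iff_norm.1 (hΩs hω), mul_one, norm_of_nonneg (by positivity)]
  refine ⟨(ρ + 1) • ω, ?_, ?_⟩
  · rw [hnorm]
    exact lt_add_one ρ
  · rwa [hnorm, inv_smul_smul₀ (by positivity)]

lemma IsPosHardySupersolution.hardyWeight_pos (hv : IsPosHardySupersolution μ (coneGT N ρ Ω) v)
    (hρ : 0 ≤ ρ) (κ : ℝ) {x : Euc N} (hx : x ∈ coneGT N ρ Ω) : 0 < hardyWeight κ v x := by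
  have hx0 : 0 < ‖x‖ := hρ.trans_lt hx.1
  have hvx := hv.pos x hx
  unfold hardyWeight
  positivity

lemma IsPosHardySupersolution.continuousOn_hardyWeight
    (hv : IsPosHardySupersolution μ (coneGT N ρ Ω) v) (hρ : 0 ≤ ρ) (κ : ℝ) :
    ContinuousOn (hardyWeight κ v) (coneGT N ρ Ω) := by
  have hne : ∀ x ∈ coneGT N ρ Ω, ‖x‖ ≠ 0 := fun x hx => (hρ.trans_lt hx.1).ne'
  have hnorm : ContinuousOn (fun x : Euc N => ‖x‖) (coneGT N ρ Ω) := continuous_norm.continuousOn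
  exact hv.contDiffOn.continuousOn.mul
    (((continuousOn_const.mul (hnorm.log hne)).rexp).mul
      ((hnorm.pow 2).inv₀ fun x hx => pow_ne_zero 2 (hne x hx)))

lemma IsPosHardySupersolution.not_tendsto_setIntegral_hardyWeight_div
    (hv : IsPosHardySupersolution μ (coneGT N ρ Ω) v) (hΩs : Ω ⊆ Metric.sphere 0 1)
    (hΩne : Ω.Nonempty) (hΩ : IsOpen (cone N Ω)) (hφ : DirichletEigenpair N Ω lam1 φ)
    (hκ : κ * (κ + (N - 2)) = lam1 - μ) (hβ : 0 ≤ 2 * κ + (N - 2)) (hρ : 0 < ρ)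
    (hint : ∀ T, IntegrableOn (hardyWeight κ v) (coneGT N ρ Ω ∩ {x | log ‖x‖ ≤ T})) :
    ¬ Tendsto (fun T => (∫ x in coneGT N ρ Ω ∩ {x | log ‖x‖ ≤ T}, hardyWeight κ v x) / T)
      atTop (𝓝 0) := by
  intro hgrowth
  set S := coneGT N ρ Ω
  set f : Euc N → ℝ := fun x => hardyWeight κ v x * angularExt φ x
  have hSo : IsOpen S := isOpen_coneGT hΩ hρ.le
  have hlog : Measurable fun x : Euc N => log ‖x‖ := measurable_log.comp measurable_norm
  have hfpos : ∀ x ∈ S, 0 < f x := fun x hx =>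
    mul_pos (hv.hardyWeight_pos hρ.le κ hx) (hφ.pos _ hx.2)
  have hfle : ∀ x ∈ S, f x ≤ hardyWeight κ v x := fun x hx =>
    mul_le_of_le_one_right (hv.hardyWeight_pos hρ.le κ hx).le
      (hφ.le_one _ (subset_closure hx.2))
  have hfint : ∀ T, IntegrableOn f (S ∩ {x | log ‖x‖ ≤ T}) := fun T =>
    hφ.integrableOn_mul_angularExt hΩ hρ.le (hint T)
  have hfmeas : AEMeasurable f (volume.restrict S) :=
    ((hv.continuousOn_hardyWeight hρ.le κ).mul (hφ.smoothExt.continuousOn.mono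
      (coneGT_subset_cone hρ.le))).aemeasurable hSo.measurableSet
  have hfgrowth : Tendsto (fun T => (densityLaw (volume.restrict S) f (fun x => log ‖x‖)).real
      (Iic T) / T) atTop (𝓝 0) := by
    refine squeeze_zero' ((eventually_ge_atTop 0).mono fun T hT => by positivity)
      ((eventually_ge_atTop 0).mono fun T hT => div_le_div_of_nonneg_right ?_ hT) hgrowth
    exact (densityLaw_restrict_real_apply hlog hSo.measurableSet (fun x hx => (hfpos x hx).le)
      measurableSet_Iic (hfint T)).trans_le (setIntegral_mono_on (hfint T) (hint T)
        (hSo.measurableSet.inter (hlog measurableSet_Iic)) fun x hx => hfle x hx.1)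
  refine densityLaw_restrict_ne_zero hlog hSo.measurableSet
    (hSo.measure_ne_zero volume (nonempty_coneGT hΩs hΩne hρ)) hfmeas hfpos
    (A := Ioi (log ρ)) measurableSet_Ioi (fun x hx => log_lt_log hρ hx.1) ?_
  refine measure_Ioi_eq_zero_of_integral_dampedOp_nonpos hβ
    (fun T => densityLaw_restrict_ne_top hlog measurableSet_Iic (hfint T)) hfgrowth
    fun k hk hkc hks hk0 => ?_
  rw [integral_densityLaw hlog hfmeas
    ((ae_restrict_mem hSo.measurableSet).mono fun x hx => (hfpos x hx).le)
    (continuous_dampedOp hk _)]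
  exact hv.setIntegral_dampedOp_nonpos hΩs hΩ hφ hκ hρ hint hk hkc hks hk0

end Liouville

section LogarithmicGrowth

section Annulus

variable {E : Type*} [NormedAddCommGroup E] [NormedSpace ℝ E] [FiniteDimensional ℝ E]
  [Nontrivial E] [MeasurableSpace E] [BorelSpace E]

lemma pow_pred_smul_indicator_inv {d : ℕ} (hd : 0 < d) {S : Set ℝ} {y : ℝ} (hy : y ≠ 0) :
    y ^ (d - 1) • S.indicator (fun y => (y ^ d)⁻¹) y = S.indicator (fun y => y⁻¹) y := by
  by_cases h : y ∈ S
  · obtain ⟨n, rfl⟩ := Nat.exists_eq_add_one.2 hd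
    rw [indicator_of_mem h, indicator_of_mem h, add_tsub_cancel_right, smul_eq_mul, pow_succ]
    field_simp
  · rw [indicator_of_notMem h, indicator_of_notMem h, smul_zero]

variable (m : Measure E) [m.IsAddHaarMeasure] {a : ℝ}

lemma integrableOn_norm_pow_finrank_inv (ha : 0 < a) (b : ℝ) :
    IntegrableOn (fun x : E => (‖x‖ ^ Module.finrank ℝ E)⁻¹) (norm ⁻¹' Ioc a b) m := by
  have hint : IntegrableOn (fun y : ℝ => y⁻¹) (Ioc a b) :=
    ((continuousOn_inv₀.mono fun y hy => (ha.trans_le hy.1).ne').integrableOn_Icc).mono_set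
      Ioc_subset_Icc_self
  rw [← integrable_indicator_iff (measurable_norm measurableSet_Ioc)]
  refine (integrable_fun_norm_addHaar m
    (f := (Ioc a b).indicator fun y => (y ^ Module.finrank ℝ E)⁻¹)).2 ?_
  refine (integrableOn_congr_fun (fun y hy =>
    pow_pred_smul_indicator_inv Module.finrank_pos (ne_of_gt hy)) measurableSet_Ioi).2 ?_
  exact ((integrable_indicator_iff measurableSet_Ioc).2 hint).integrableOn

lemma setIntegral_norm_pow_finrank_inv (ha : 0 < a) {b : ℝ} (hab : a ≤ b) :
    ∫ x in norm ⁻¹' Ioc a b, (‖x‖ ^ Module.finrank ℝ E)⁻¹ ∂m =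
      Module.finrank ℝ E * m.real (Metric.ball 0 1) * log (b / a) := by
  have hsub : Ioi 0 ∩ Ioc a b = Ioc a b := inter_eq_right.2 fun y hy => ha.trans hy.1
  rw [← integral_indicator (measurable_norm measurableSet_Ioc)]
  refine (integral_fun_norm_addHaar m
    ((Ioc a b).indicator fun y => (y ^ Module.finrank ℝ E)⁻¹)).trans ?_
  rw [setIntegral_congr_fun measurableSet_Ioi fun y hy =>
      pow_pred_smul_indicator_inv Module.finrank_pos (ne_of_gt hy),
    setIntegral_indicator measurableSet_Ioc, hsub, ← intervalIntegral.integral_of_le hab,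
    integral_inv_of_pos ha (ha.trans_le hab), nsmul_eq_mul, smul_eq_mul, mul_assoc]

end Annulus

lemma tendsto_div_atTop_zero_of_forall_le {f : ℝ → ℝ} (hf : ∀ T, 0 ≤ f T)
    (h : ∀ δ > 0, ∃ C, ∀ T ≥ 0, f T ≤ δ * T + C) :
    Tendsto (fun T => f T / T) atTop (𝓝 0) := by
  rw [Metric.tendsto_atTop]
  intro ε hε
  obtain ⟨C, hC⟩ := h (ε / 2) (by positivity)
  refine ⟨max 1 (2 * |C| / ε + 1), fun T hT => ?_⟩
  have hT1 : 1 ≤ T := (le_max_left _ _).trans hT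
  have hTC : 2 * |C| / ε < T := (lt_add_one _).trans_le ((le_max_right _ _).trans hT)
  rw [div_lt_iff₀ hε] at hTC
  rw [Real.dist_0_eq_abs, abs_of_nonneg (div_nonneg (hf T) (by positivity)),
    div_lt_iff₀ (by positivity)]
  linarith [hC T (by positivity), le_abs_self C]

variable {N : ℕ} {Ω : Set (Euc N)} {ρ : ℝ}

lemma coneGT_inter_log_norm_le_subset (hρ : 1 ≤ ρ) (T : ℝ) :
    coneGT N ρ Ω ∩ {x | log ‖x‖ ≤ T} ⊆ norm ⁻¹' Ioc 1 (exp T) := fun _ hx =>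
  ⟨hρ.trans_lt hx.1.1, (log_le_iff_le_exp (one_pos.trans_le (hρ.trans hx.1.1.le))).1 hx.2⟩

lemma measurableSet_coneGT_inter (hΩ : IsOpen (cone N Ω)) (hρ : 0 ≤ ρ) (T : ℝ) :
    MeasurableSet (coneGT N ρ Ω ∩ {x | log ‖x‖ ≤ T}) :=
  (isOpen_coneGT hΩ hρ).measurableSet.inter
    ((measurable_log.comp measurable_norm) measurableSet_Iic)

variable [Nontrivial (Euc N)] {W g : Euc N → ℝ}

lemma integrableOn_coneGT_norm_pow_inv (hρ : 1 ≤ ρ) (T : ℝ) :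
    IntegrableOn (fun x : Euc N => (‖x‖ ^ N)⁻¹) (coneGT N ρ Ω ∩ {x | log ‖x‖ ≤ T}) := by
  simpa only [finrank_euclideanSpace_fin] using
    (integrableOn_norm_pow_finrank_inv (volume : Measure (Euc N)) one_pos (exp T)).mono_set
      (coneGT_inter_log_norm_le_subset hρ T)

lemma setIntegral_coneGT_norm_pow_inv_le (hρ : 1 ≤ ρ) {T : ℝ} (hT : 0 ≤ T) :
    ∫ x in coneGT N ρ Ω ∩ {x | log ‖x‖ ≤ T}, (‖x‖ ^ N)⁻¹ ≤
      N * volume.real (Metric.ball (0 : Euc N) 1) * T := by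
  have hint := integrableOn_norm_pow_finrank_inv (volume : Measure (Euc N)) one_pos (exp T)
  have hval := setIntegral_norm_pow_finrank_inv (volume : Measure (Euc N)) one_pos
    (one_le_exp hT)
  rw [finrank_euclideanSpace_fin] at hint hval
  rw [div_one, log_exp] at hval
  rw [← hval]
  exact setIntegral_mono_set hint (ae_of_all _ fun x => by positivity)
    (coneGT_inter_log_norm_le_subset hρ T).eventuallyLE

lemma integrableOn_coneGT_of_le (hΩ : IsOpen (cone N Ω)) (hρ : 1 ≤ ρ)
    (hW : ContinuousOn W (coneGT N ρ Ω)) (hW0 : ∀ x ∈ coneGT N ρ Ω, 0 ≤ W x)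
    (hg : IntegrableOn g (coneGT N ρ Ω)) {δ C : ℝ}
    (hWg : ∀ x ∈ coneGT N ρ Ω, W x ≤ δ * (‖x‖ ^ N)⁻¹ + C * g x) (T : ℝ) :
    IntegrableOn W (coneGT N ρ Ω ∩ {x | log ‖x‖ ≤ T}) := by
  have hS := measurableSet_coneGT_inter hΩ (zero_le_one.trans hρ) T
  refine (((integrableOn_coneGT_norm_pow_inv hρ T).const_mul δ).add
    ((hg.mono_set inter_subset_left).const_mul C)).mono'
    ((hW.mono inter_subset_left).aestronglyMeasurable hS) ?_
  filter_upwards [ae_restrict_mem hS] with x hx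
  exact (norm_of_nonneg (hW0 x hx.1)).trans_le (hWg x hx.1)

lemma setIntegral_coneGT_le (hΩ : IsOpen (cone N Ω)) (hρ : 1 ≤ ρ)
    (hW : ContinuousOn W (coneGT N ρ Ω)) (hW0 : ∀ x ∈ coneGT N ρ Ω, 0 ≤ W x)
    (hg : IntegrableOn g (coneGT N ρ Ω)) (hg0 : ∀ x ∈ coneGT N ρ Ω, 0 ≤ g x) {δ C : ℝ}
    (hδ : 0 ≤ δ) (hC : 0 ≤ C) (hWg : ∀ x ∈ coneGT N ρ Ω, W x ≤ δ * (‖x‖ ^ N)⁻¹ + C * g x) {T : ℝ}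
    (hT : 0 ≤ T) :
    ∫ x in coneGT N ρ Ω ∩ {x | log ‖x‖ ≤ T}, W x ≤
      δ * (N * volume.real (Metric.ball (0 : Euc N) 1) * T) + C * ∫ x in coneGT N ρ Ω, g x := by
  have hS := measurableSet_coneGT_inter hΩ (zero_le_one.trans hρ) T
  have hnorm := (integrableOn_coneGT_norm_pow_inv (Ω := Ω) hρ T).const_mul δ
  have hgT := (hg.mono_set (inter_subset_left (t := {x | log ‖x‖ ≤ T}))).const_mul C
  refine (setIntegral_mono_on (integrableOn_coneGT_of_le hΩ hρ hW hW0 hg hWg T) (hnorm.add hgT) hS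
    fun x hx => hWg x hx.1).trans ?_
  rw [integral_add' hnorm hgT, integral_const_mul, integral_const_mul]
  gcongr
  · exact setIntegral_coneGT_norm_pow_inv_le hρ hT
  · exact (ae_restrict_mem (isOpen_coneGT hΩ (zero_le_one.trans hρ)).measurableSet).mono hg0
  · exact inter_subset_left

lemma tendsto_setIntegral_coneGT_div (hΩ : IsOpen (cone N Ω)) (hρ : 1 ≤ ρ)
    (hW : ContinuousOn W (coneGT N ρ Ω)) (hW0 : ∀ x ∈ coneGT N ρ Ω, 0 ≤ W x)
    (hg : IntegrableOn g (coneGT N ρ Ω)) (hg0 : ∀ x ∈ coneGT N ρ Ω, 0 ≤ g x)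
    (hWg : ∀ δ > 0, ∃ C ≥ 0, ∀ x ∈ coneGT N ρ Ω, W x ≤ δ * (‖x‖ ^ N)⁻¹ + C * g x) :
    Tendsto (fun T => (∫ x in coneGT N ρ Ω ∩ {x | log ‖x‖ ≤ T}, W x) / T) atTop (𝓝 0) := by
  refine tendsto_div_atTop_zero_of_forall_le
    (fun T => setIntegral_nonneg (measurableSet_coneGT_inter hΩ (zero_le_one.trans hρ) T)
      fun x hx => hW0 x hx.1) fun δ hδ => ?_
  set K := N * volume.real (Metric.ball (0 : Euc N) 1)
  have hK : 0 ≤ K := by positivity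
  obtain ⟨C, hC, hWC⟩ := hWg (δ / (K + 1)) (by positivity)
  refine ⟨C * ∫ x in coneGT N ρ Ω, g x, fun T hT => ?_⟩
  refine (setIntegral_coneGT_le hΩ hρ hW hW0 hg hg0 (by positivity) hC hWC hT).trans
    (add_le_add_left ?_ _)
  calc δ / (K + 1) * (K * T) ≤ δ / (K + 1) * ((K + 1) * T) := by gcongr; linarith
    _ = δ * T := by field_simp

end LogarithmicGrowth

section Supersolutions

variable {N : ℕ} {Ω U V : Set (Euc N)} {ρ lam1 μ γ : ℝ} {φ u w : Euc N → ℝ}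

lemma IsPosHardySupersolution.mono (hu : IsPosHardySupersolution μ V u) (hUV : U ⊆ V) :
    IsPosHardySupersolution μ U u where
  contDiffOn := hu.contDiffOn.mono hUV
  pos x hx := hu.pos x (hUV hx)
  laplacian_add_nonpos x hx := hu.laplacian_add_nonpos x (hUV hx)

lemma IsPosHardySupersolution.geomMean (hU : IsOpen U) (hu : IsPosHardySupersolution μ U u)
    (hw : IsPosHardySupersolution μ U w) {a : ℝ} (ha : a ∈ Icc 0 1) :
    IsPosHardySupersolution μ U fun x => u x ^ a * w x ^ (1 - a) where
  contDiffOn x hx := (contDiffAt_geomMean (hu.contDiffOn.contDiffAt (hU.mem_nhds hx))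
    (hw.contDiffOn.contDiffAt (hU.mem_nhds hx)) (hu.pos x hx) (hw.pos x hx) a).contDiffWithinAt
  pos x hx := mul_pos (rpow_pos_of_pos (hu.pos x hx) a) (rpow_pos_of_pos (hw.pos x hx) (1 - a))
  laplacian_add_nonpos x hx := by
    have h := laplacian_geomMean_le (c := -(μ * (‖x‖ ^ 2)⁻¹)) ha
      (hu.contDiffOn.contDiffAt (hU.mem_nhds hx)) (hw.contDiffOn.contDiffAt (hU.mem_nhds hx))
      (hu.pos x hx) (hw.pos x hx) (by linarith [hu.laplacian_add_nonpos x hx])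
      (by linarith [hw.laplacian_add_nonpos x hx])
    linarith

lemma DirichletEigenpair.isPosHardySupersolution_separated
    (hφ : DirichletEigenpair N Ω lam1 φ) (hΩ : IsOpen (cone N Ω))
    (hγ : γ * (γ + (N - 2)) = lam1 - μ) :
    IsPosHardySupersolution μ (cone N Ω) fun x => exp (γ * log ‖x‖) * angularExt φ x where
  contDiffOn x hx := ((contDiffAt_const.mul (contDiffAt_log_norm hx.1)).exp.mul
    (hφ.smoothExt.contDiffAt (hΩ.mem_nhds hx))).contDiffWithinAt
  pos x hx := mul_pos (exp_pos _) (hφ.pos _ hx.2)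
  laplacian_add_nonpos x hx := by
    have h := hardy_separated (k := fun _ => 1) (F := id) hΩ hφ hγ contDiff_const contDiff_id hx
    simp only [mul_one, id_eq, deriv_id', deriv_const', dampedOp, mul_zero, sub_self, add_zero,
      zero_mul] at h
    exact h.le

lemma norm_pow_inv_eq_exp {x : Euc N} (hx : 0 < ‖x‖) (n : ℕ) :
    (‖x‖ ^ n)⁻¹ = exp (-(n * log ‖x‖)) := by
  rw [exp_neg, exp_nat_mul, exp_log hx]

lemma rpow_le_add_rpow_mul_rpow {a p δ z : ℝ} (ha : 0 < a) (hap : a ≤ p) (hδ : 0 < δ)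
    (hz : 0 ≤ z) : z ^ a ≤ δ + δ ^ ((a - p) / a) * z ^ p := by
  rcases le_or_gt (z ^ a) δ with h | h
  · exact h.trans (le_add_of_nonneg_right (by positivity))
  · have hz0 : 0 < z := hz.lt_of_ne' fun h0 => by
      rw [h0, zero_rpow ha.ne'] at h
      exact h.not_gt hδ
    calc z ^ a = (z ^ a) ^ ((a - p) / a) * z ^ p := by
          rw [← rpow_mul hz, mul_div_cancel₀ _ ha.ne', ← rpow_add hz0, sub_add_cancel]
      _ ≤ δ ^ ((a - p) / a) * z ^ p := by
          gcongr ?_ * _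
          exact rpow_le_rpow_of_nonpos hδ h.le (div_nonpos_of_nonpos_of_nonneg (by linarith) ha.le)
      _ ≤ _ := le_add_of_nonneg_left hδ.le

variable {a p α : ℝ} {x : Euc N}

lemma hardyWeight_geomMean_le (hx : 0 < ‖x‖) (hu : 0 < u x)
    (hφ : angularExt φ x ∈ Icc 0 1) (ha1 : a ≤ 1) :
    hardyWeight (-γ - (N - 2))
        (fun x => u x ^ a * (exp (γ * log ‖x‖) * angularExt φ x) ^ (1 - a)) x ≤
      (u x * exp (-(γ * log ‖x‖))) ^ a * (‖x‖ ^ N)⁻¹ := by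
  calc u x ^ a * (exp (γ * log ‖x‖) * angularExt φ x) ^ (1 - a) *
        (exp ((-γ - (N - 2)) * log ‖x‖) * (‖x‖ ^ 2)⁻¹)
      ≤ u x ^ a * exp (γ * log ‖x‖) ^ (1 - a) *
          (exp ((-γ - (N - 2)) * log ‖x‖) * (‖x‖ ^ 2)⁻¹) := by
        have hΦ := mul_le_of_le_one_right (exp_pos (γ * log ‖x‖)).le hφ.2
        have hΦ0 := mul_nonneg (exp_pos (γ * log ‖x‖)).le hφ.1
        have := sub_nonneg.2 ha1
        gcongr
    _ = (u x * exp (-(γ * log ‖x‖))) ^ a * (‖x‖ ^ N)⁻¹ := by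
        rw [mul_rpow hu.le (exp_pos _).le, ← exp_mul, ← exp_mul, norm_pow_inv_eq_exp hx,
          norm_pow_inv_eq_exp hx, mul_assoc, mul_assoc, mul_assoc, ← exp_add, ← exp_add, ← exp_add]
        push_cast
        ring_nf

lemma rpow_mul_norm_pow_inv_le (hx : 1 ≤ ‖x‖) (hu : 0 < u x) (hcrit : p * -γ ≤ N - α) :
    (u x * exp (-(γ * log ‖x‖))) ^ p * (‖x‖ ^ N)⁻¹ ≤ u x ^ p * ‖x‖ ^ (-α) := by
  have hx0 : 0 < ‖x‖ := one_pos.trans_le hx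
  rw [mul_rpow hu.le (exp_pos _).le, ← exp_mul, norm_pow_inv_eq_exp hx0, rpow_def_of_pos hx0,
    mul_assoc, ← exp_add]
  gcongr
  linarith [mul_le_mul_of_nonneg_left hcrit (log_nonneg hx)]

lemma hardyWeight_geomMean_le_add {δ : ℝ} (hx : 1 ≤ ‖x‖) (hu : 0 < u x)
    (hφ : angularExt φ x ∈ Icc 0 1) (ha0 : 0 < a) (ha1 : a ≤ 1) (hap : a ≤ p) (hδ : 0 < δ)
    (hcrit : p * -γ ≤ N - α) :
    hardyWeight (-γ - (N - 2))
        (fun x => u x ^ a * (exp (γ * log ‖x‖) * angularExt φ x) ^ (1 - a)) x ≤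
      δ * (‖x‖ ^ N)⁻¹ + δ ^ ((a - p) / a) * (u x ^ p * ‖x‖ ^ (-α)) := by
  set z := u x * exp (-(γ * log ‖x‖))
  calc hardyWeight (-γ - (N - 2))
        (fun x => u x ^ a * (exp (γ * log ‖x‖) * angularExt φ x) ^ (1 - a)) x
      ≤ z ^ a * (‖x‖ ^ N)⁻¹ := hardyWeight_geomMean_le (one_pos.trans_le hx) hu hφ ha1
    _ ≤ (δ + δ ^ ((a - p) / a) * z ^ p) * (‖x‖ ^ N)⁻¹ := by
        gcongr
        exact rpow_le_add_rpow_mul_rpow ha0 hap hδ (by positivity)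
    _ = δ * (‖x‖ ^ N)⁻¹ + δ ^ ((a - p) / a) * (z ^ p * (‖x‖ ^ N)⁻¹) := by ring
    _ ≤ _ := by
        gcongr _ + _ * ?_
        exact rpow_mul_norm_pow_inv_le hx hu hcrit

end Supersolutions

section Main

variable {N : ℕ} {Ω : Set (Euc N)} {ρ lam1 μ α p : ℝ} {φ u : Euc N → ℝ}

lemma lintegral_rpow_mul_norm_rpow_eq_top {γ : ℝ} (hΩs : Ω ⊆ Metric.sphere 0 1)
    (hΩne : Ω.Nonempty) (hΩ : IsOpen (cone N Ω)) (hφ : DirichletEigenpair N Ω lam1 φ)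
    (hγ : γ * (γ + (N - 2)) = lam1 - μ) (hγ' : 2 * γ + (N - 2) ≤ 0) (hρ : 1 ≤ ρ) (hp : 0 < p)
    (hcrit : p * -γ ≤ N - α) (hu : IsPosHardySupersolution μ (coneGT N ρ Ω) u) :
    ∫⁻ y in coneGT N ρ Ω, ENNReal.ofReal (u y ^ p * ‖y‖ ^ (-α)) = ⊤ := by
  by_contra hfinite
  have hρ0 : 0 < ρ := one_pos.trans_le hρ
  set S := coneGT N ρ Ω
  have hS : IsOpen S := isOpen_coneGT hΩ hρ0.le
  have hnorm : ∀ x ∈ S, 1 ≤ ‖x‖ := fun x hx => hρ.trans hx.1.le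
  obtain ⟨ω, hω⟩ := hΩne
  have : Nontrivial (Euc N) := ⟨ω, 0, ne_zero_of_mem_unit_sphere ⟨ω, hΩs hω⟩⟩
  have hg0 : ∀ x ∈ S, 0 ≤ u x ^ p * ‖x‖ ^ (-α) := fun x hx =>
    mul_nonneg (rpow_nonneg (hu.pos x hx).le p) (by positivity)
  have hgc : ContinuousOn (fun x => u x ^ p * ‖x‖ ^ (-α)) S :=
    (hu.contDiffOn.continuousOn.rpow_const fun x hx => .inl (hu.pos x hx).ne').mul
      (continuous_norm.continuousOn.rpow_const fun x hx =>
        .inl (one_pos.trans_le (hnorm x hx)).ne')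
  have hg : IntegrableOn (fun x => u x ^ p * ‖x‖ ^ (-α)) S :=
    (lintegral_ofReal_ne_top_iff_integrable (hgc.aestronglyMeasurable hS.measurableSet)
      ((ae_restrict_mem hS.measurableSet).mono hg0)).1 hfinite
  have ha0 : 0 < min p 1 := lt_min hp one_pos
  have ha1 : min p 1 ≤ 1 := min_le_right _ _
  have hv := hu.geomMean hS ((hφ.isPosHardySupersolution_separated hΩ hγ).mono
    (coneGT_subset_cone hρ0.le)) ⟨ha0.le, ha1⟩
  have hbound (δ : ℝ) (hδ : 0 < δ) (x : Euc N) (hx : x ∈ S) :=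
    hardyWeight_geomMean_le_add (hnorm x hx) (hu.pos x hx)
      ⟨(hφ.pos _ hx.2).le, hφ.le_one _ (subset_closure hx.2)⟩ ha0 ha1 (min_le_left p 1) hδ hcrit
  have hW := hv.continuousOn_hardyWeight hρ0.le (-γ - (N - 2))
  have hW0 := fun x hx => (hv.hardyWeight_pos hρ0.le (-γ - (N - 2)) (x := x) hx).le
  exact hv.not_tendsto_setIntegral_hardyWeight_div hΩs ⟨ω, hω⟩ hΩ hφ
    (by linear_combination hγ) (by linarith) hρ0
    (integrableOn_coneGT_of_le hΩ hρ hW hW0 hg (hbound 1 one_pos))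
    (tendsto_setIntegral_coneGT_div hΩ hρ hW hW0 hg hg0
      fun δ hδ => ⟨_, by positivity, hbound δ hδ⟩)

lemma two_rpow_neg_abs_mul_norm_rpow_le {x y : Euc N} (hy : 0 < ‖y‖) (hxy : 2 * ‖x‖ ≤ ‖y‖) :
    2 ^ (-|α|) * ‖y‖ ^ (-α) ≤ ‖x - y‖ ^ (-α) := by
  have hlower : ‖y‖ / 2 ≤ ‖x - y‖ := by linarith [norm_sub_norm_le y x, norm_sub_rev x y]
  have hupper : ‖x - y‖ ≤ 2 * ‖y‖ := by linarith [norm_sub_le x y, norm_nonneg x]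
  rcases le_total 0 α with hα | hα
  · rw [abs_of_nonneg hα, ← mul_rpow zero_le_two hy.le]
    exact rpow_le_rpow_of_nonpos (by linarith) hupper (neg_nonpos.2 hα)
  · rw [abs_of_nonpos hα, neg_neg, ← inv_inv (2 : ℝ), inv_rpow (by norm_num),
      ← rpow_neg (by norm_num), ← mul_rpow (by norm_num) hy.le]
    exact rpow_le_rpow (by positivity) (by linarith) (neg_nonneg.2 hα)

lemma lintegral_coneGT_le_rieszConv {R : ℝ} (hu : ∀ y ∈ coneGT N R Ω, 0 ≤ u y)
    (hR : MeasurableSet (coneGT N R Ω)) (hR0 : 0 ≤ R) (hρR : ρ ≤ R) {x : Euc N}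
    (hxR : 2 * ‖x‖ ≤ R) :
    ∫⁻ y in coneGT N R Ω, ENNReal.ofReal (u y ^ p * ‖y‖ ^ (-α)) ≤
      ENNReal.ofReal (2 ^ |α|) * rieszConv N α ρ Ω (fun y => u y ^ p) x := by
  rw [rieszConv, ← lintegral_const_mul' _ _ ENNReal.ofReal_ne_top]
  refine (setLIntegral_mono' hR fun y hy => ?_).trans
    (lintegral_mono_set fun y hy => ⟨hρR.trans_lt hy.1, hy.2⟩)
  rw [← ENNReal.ofReal_mul (by positivity)]
  refine ENNReal.ofReal_le_ofReal ?_
  have h := two_rpow_neg_abs_mul_norm_rpow_le (α := α) (hR0.trans_lt hy.1) (hxR.trans hy.1.le)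
  rw [rpow_neg zero_le_two, inv_mul_le_iff₀ (by positivity)] at h
  calc u y ^ p * ‖y‖ ^ (-α) ≤ u y ^ p * (2 ^ |α| * ‖x - y‖ ^ (-α)) :=
        mul_le_mul_of_nonneg_left h (rpow_nonneg (hu y hy) p)
    _ = _ := mul_left_comm _ _ _

lemma gammaStar_mul_gammaStar_add (hμ : μ ≤ CHconst N lam1) :
    gammaStar N lam1 μ * (gammaStar N lam1 μ + (N - 2)) = lam1 - μ := by
  have hD : 0 ≤ ((N : ℝ) - 2) ^ 2 + 4 * (lam1 - μ) := by
    rw [CHconst] at hμ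
    linarith
  rw [gammaStar]
  linear_combination (1 / 4) * sq_sqrt hD

lemma two_mul_gammaStar_add_nonpos : 2 * gammaStar N lam1 μ + (N - 2) ≤ 0 := by
  rw [gammaStar]
  linarith [sqrt_nonneg (((N : ℝ) - 2) ^ 2 + 4 * (lam1 - μ))]

lemma IsPosSolE.isPosHardySupersolution {q : ℝ} (hu : IsPosSolE N ρ μ α p q Ω u) :
    IsPosHardySupersolution μ (coneGT N ρ Ω) u where
  contDiffOn := hu.1
  pos := hu.2.2.1
  laplacian_add_nonpos x hx := by
    have hsource : 0 ≤ (rieszConv N α ρ Ω (fun y => u y ^ p) x).toReal * u x ^ q :=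
      mul_nonneg ENNReal.toReal_nonneg (rpow_nonneg (hu.2.2.1 x hx).le q)
    have hE := hu.2.2.2.2 x hx
    rw [norm_rpow_neg_two, lap_eq_laplacian] at hE
    linarith

theorem no_solution_of_p_subcritical_general (hΩs : Ω ⊆ Metric.sphere 0 1) (hΩne : Ω.Nonempty)
    (hΩo : IsOpen {ω : Metric.sphere (0 : Euc N) 1 | (ω : Euc N) ∈ Ω})
    (hφ : DirichletEigenpair N Ω lam1 φ) (hp : 0 < p) (hμ : μ ≤ CHconst N lam1)
    (hcrit : p * -gammaStar N lam1 μ ≤ N - α)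
    (hu : IsPosHardySupersolution μ (coneGT N ρ Ω) u) (x : Euc N) :
    rieszConv N α ρ Ω (fun y => u y ^ p) x = ⊤ := by
  set R := max ρ (max 1 (2 * ‖x‖))
  have hρR : ρ ≤ R := le_max_left _ _
  have hR : 1 ≤ R := (le_max_left _ _).trans (le_max_right _ _)
  have hxR : 2 * ‖x‖ ≤ R := (le_max_right _ _).trans (le_max_right _ _)
  have hΩ := isOpen_cone hΩo
  have huR : IsPosHardySupersolution μ (coneGT N R Ω) u :=
    hu.mono fun y hy => ⟨hρR.trans_lt hy.1, hy.2⟩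
  have htop := lintegral_rpow_mul_norm_rpow_eq_top hΩs hΩne hΩ hφ
    (gammaStar_mul_gammaStar_add hμ) two_mul_gammaStar_add_nonpos hR hp hcrit huR
  have hle := lintegral_coneGT_le_rieszConv (α := α) (p := p) (fun y hy => (huR.pos y hy).le)
    (isOpen_coneGT hΩ (zero_le_one.trans hR)).measurableSet (zero_le_one.trans hR) hρR hxR
  rw [htop] at hle
  by_contra hfin
  exact ENNReal.mul_ne_top ENNReal.ofReal_ne_top hfin (top_le_iff.1 hle)

end Main

/-- if `μ ≤ C_{H,Ω}` and `p·|γ_*| ≤ N - α` then `(E)` has no positive solution. -/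
theorem no_solution_of_p_subcritical
    (N : ℕ) (hN : 2 ≤ N) (Ω : Set (Euc N)) (hΩ : IsConeDomain N Ω)
    (lam1 : ℝ) (φ : Euc N → ℝ) (hphi : DirichletEigenpair N Ω lam1 φ)
    (α p q ρ μ : ℝ) (hα : 0 ≤ α) (hαN : α < N) (hp : 0 < p) (hq : 0 < q) (hρ : 0 < ρ)
    (hμ : μ ≤ CHconst N lam1)
    (hcrit : p * (-(gammaStar N lam1 μ)) ≤ (N : ℝ) - α) :
    ¬ ∃ u : Euc N → ℝ, IsPosSolE N ρ μ α p q Ω u := by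
  rintro ⟨u, hu⟩
  obtain ⟨x, hx⟩ := nonempty_coneGT hΩ.1 hΩ.2.1.nonempty hρ
  exact (hu.2.2.2.1 x hx).ne (no_solution_of_p_subcritical_general hΩ.1 hΩ.2.1.nonempty hΩ.2.2
    hphi hp hμ hcrit hu.isPosHardySupersolution x)
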